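/- arXiv:2004.12496 — 6 statements merged into one kernel-verified Lean document; each statement's English description precedes it below -/
import Mathlib

section
/- Suppose p is a k-junta distribution on {−1,1}^n. Then for every r ≥ 1, ‖μ(⊙^r(p))‖₂² ≤ (2 · max{n, k²} · 2^r)^{2^{r−1}}. -/
/-!
Expanding the square, `‖μ(⊙^r(p))‖₂² = E_{x,y∼p} ⟨x,y⟩^{2m}` with `2m = 2^r`, so it suffices to
bound `E_y ⟨x,y⟩^{2m}` for each fixed `x`. Split `⟨x,y⟩ = a + B`, with `a` the sum over the junta
coordinates `J` (so `|a| ≤ k`) and `B` the sum over the others. As `p` does not depend on the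
coordinates outside `J`, given `a` the terms of `B` are at most `n` independent uniform signs.

For a uniform sign `ε` and `j ≤ m` one has `E (a+ε)^{2j} ≤ (a²+2m)^j` (`two_point`), by the
coefficient comparison `C(2j,2i) ≤ C(j,i)(2j)^i`. Expanding in powers of `s ≥ 0` gives
`E ((a+ε)²+s)^m ≤ (a²+2m+s)^m` (`two_point_shift`), and removing the signs one at a time yields
`E (a+B)^{2m} ≤ E (a²+2mn)^m ≤ (k²+2mn)^m` (`moment_peel`, `moment_le`). With
`M = max(n,k²)` and `m ≥ 1` this is at most `((2m+1)M)^m ≤ (4mM)^m`, the claimed bound.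
-/

open Finset

namespace JuntaPaper

/-- The Boolean cube `{-1,1}^n`, encoded with `true ↦ 1` and `false ↦ -1`. -/
abbrev Cube (n : ℕ) := Fin n → Bool

/-- The real value of a bit. -/
noncomputable def bval (b : Bool) : ℝ := if b then 1 else -1

/-- `p` is a probability distribution on the cube. -/
def IsDist {n : ℕ} (p : Cube n → ℝ) : Prop :=
  (∀ x, 0 ≤ p x) ∧ ∑ x, p x = 1

/-- Total variation distance between two distributions on a finite set. -/
noncomputable def dtv {α : Type*} [Fintype α] (p q : α → ℝ) : ℝ :=
  (1 / 2) * ∑ x, |p x - q x|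

/-- The uniform distribution on the cube. -/
noncomputable def uniform (n : ℕ) : Cube n → ℝ := fun _ => (2 : ℝ)⁻¹ ^ n

/-- `p` is a junta distribution over the coordinates in `J`. -/
def JuntaOn {n : ℕ} (J : Finset (Fin n)) (p : Cube n → ℝ) : Prop :=
  ∀ x y : Cube n, (∀ i ∈ J, x i = y i) → p x = p y

/-- The mean vector of a distribution on the cube. -/
noncomputable def meanVec {n : ℕ} (p : Cube n → ℝ) (i : Fin n) : ℝ :=
  ∑ x, p x * bval (x i)

/-- A restriction: `none` means `*` (free), `some b` fixes the coordinate to `b`. -/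
abbrev Restr (n : ℕ) := Fin n → Option Bool

/-- `x` agrees with the restriction `ρ` on all fixed coordinates. -/
def agrees {n : ℕ} (ρ : Restr n) (x : Cube n) : Prop :=
  ∀ i : Fin n, ∀ b : Bool, ρ i = some b → x i = b

instance {n : ℕ} (ρ : Restr n) (x : Cube n) : Decidable (agrees ρ x) :=
  inferInstanceAs (Decidable (∀ i : Fin n, ∀ b : Bool, ρ i = some b → x i = b))

/-- The set of free (star) coordinates of a restriction. -/
def starsOf {n : ℕ} (ρ : Restr n) : Finset (Fin n) :=
  Finset.univ.filter (fun i => ρ i = none)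

/-- The probability mass of the subcube described by `ρ`. -/
noncomputable def mass {n : ℕ} (p : Cube n → ℝ) (ρ : Restr n) : ℝ :=
  ∑ x, if agrees ρ x then p x else 0

/-- The conditional probability of `x` given the subcube `ρ` (this is the restricted
distribution `p|ρ`, viewed on completions of `ρ`). -/
noncomputable def condProb {n : ℕ} (p : Cube n → ℝ) (ρ : Restr n) (x : Cube n) : ℝ :=
  (if agrees ρ x then p x else 0) / mass p ρ

/-- The `i`-th coordinate of the mean vector of the restricted distribution `p|ρ`. -/
noncomputable def condMean {n : ℕ} (p : Cube n → ℝ) (ρ : Restr n) (i : Fin n) : ℝ :=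
  ∑ x, condProb p ρ x * bval (x i)

/-- The Euclidean norm `‖μ(p|ρ)‖₂` of the mean vector of the restricted
distribution `p|ρ` (over its free coordinates). -/
noncomputable def restNorm {n : ℕ} (p : Cube n → ℝ) (ρ : Restr n) : ℝ :=
  Real.sqrt (∑ i, (if ρ i = none then condMean p ρ i else 0) ^ 2)

/-- The restriction with stars exactly on `S` and fixed to `x` elsewhere. -/
def restrictOn {n : ℕ} (S : Finset (Fin n)) (x : Cube n) : Restr n :=
  fun i => if i ∈ S then none else some (x i)

/-- Probability that `S_σ(T)` produces `S ⊆ T`. -/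
noncomputable def subsetProb {n : ℕ} (σ : ℝ) (T S : Finset (Fin n)) : ℝ :=
  σ ^ S.card * (1 - σ) ^ (T.card - S.card)

/-- Expectation of `F(ν)` for `ν ∼ D_σ(p|ρ)`: draw `x ∼ p` conditioned on agreeing with
`ρ`, draw `S ⊆ stars(ρ)` including each element independently with probability `σ`, and
evaluate `F` on the combined restriction (stars exactly on `S`). -/
noncomputable def EDσCond {n : ℕ} (p : Cube n → ℝ) (ρ : Restr n) (σ : ℝ)
    (F : Restr n → ℝ) : ℝ :=
  ∑ x, condProb p ρ x *
    ∑ S ∈ (starsOf ρ).powerset, subsetProb σ (starsOf ρ) S * F (restrictOn S x)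

/-- The all-stars restriction (so `p|allStars n = p`). -/
def allStars (n : ℕ) : Restr n := fun _ => none

/-- `‖μ(⊙^r(p))‖₂²`: the squared Euclidean norm of the `r`-th order tensor mean of `p`,
whose entry at `(i_1,…,i_R) ∈ [n]^R` (with `R = 2^r`) is `E_{x∼p}[x_{i_1}⋯x_{i_R}]`. -/
noncomputable def tensorNormSq {n : ℕ} (p : Cube n → ℝ) (r : ℕ) : ℝ :=
  ∑ I : Fin (2 ^ r) → Fin n, (∑ x, p x * ∏ t, bval (x (I t))) ^ 2

/-- The standard inner product of two cube points viewed in `{-1,1}^n ⊆ ℝ^n`. -/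
noncomputable def innerB {n : ℕ} (x y : Cube n) : ℝ := ∑ i, bval (x i) * bval (y i)

/-- The test statistic `Z^(r) = (1/q²) Σ_i Σ_j ⟨X_i, Y_j⟩^{2^r}`. -/
noncomputable def Zstat {n : ℕ} (q : ℕ) (r : ℕ) (X Y : Fin q → Cube n) : ℝ :=
  (1 / (q : ℝ) ^ 2) * ∑ i, ∑ j, innerB (X i) (Y j) ^ (2 ^ r)

/-- Expectation of `F(X₁,…,X_q, Y₁,…,Y_q)` over `2q` independent samples from `p`. -/
noncomputable def Esamp {n : ℕ} (p : Cube n → ℝ) (q : ℕ)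
    (F : (Fin q → Cube n) → (Fin q → Cube n) → ℝ) : ℝ :=
  ∑ X : Fin q → Cube n, ∑ Y : Fin q → Cube n,
    (∏ i, p (X i)) * (∏ j, p (Y j)) * F X Y

open Classical in
/-- Probability of an event of the `2q` independent samples from `p`. -/
noncomputable def Prsamp {n : ℕ} (p : Cube n → ℝ) (q : ℕ)
    (E : (Fin q → Cube n) → (Fin q → Cube n) → Prop) : ℝ :=
  ∑ X : Fin q → Cube n, ∑ Y : Fin q → Cube n,
    (∏ i, p (X i)) * (∏ j, p (Y j)) * (if E X Y then 1 else 0)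

/-- `p` is a `k`-junta distribution. -/
def IsJuntaDist {n : ℕ} (k : ℕ) (p : Cube n → ℝ) : Prop :=
  ∃ J : Finset (Fin n), J.card ≤ k ∧ JuntaOn J p

/-- The thresholds `τ_0 = ε²n/2`, `τ_r = q²τ_{r-1}²/5000`. -/
noncomputable def tauSeq (q : ℕ) (ε : ℝ) (n : ℕ) : ℕ → ℝ
  | 0 => ε ^ 2 * n / 2
  | r + 1 => (q : ℝ) ^ 2 * tauSeq q ε n r ^ 2 / 5000

/-- Coefficientwise form of the two-point inequality `two_point`. -/
lemma choose_two_mul_le (j i : ℕ) (hi : i ≤ j) :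
    (Nat.choose (2 * j) (2 * i) : ℝ) ≤ Nat.choose j i * (2 * j : ℝ) ^ i := by
  induction i with
  | zero => simp
  | succ i ih =>
    have ih := ih (by omega)
    have h1 := Nat.choose_succ_right_eq (2 * j) (2 * i)
    have h2 := Nat.choose_succ_right_eq (2 * j) (2 * i + 1)
    have h3 := Nat.choose_succ_right_eq j i
    obtain ⟨d, rfl⟩ : ∃ d, j = i + 1 + d := ⟨j - (i + 1), by omega⟩
    rw [show 2 * (i + 1 + d) - 2 * i = 2 * d + 2 by omega] at h1
    rw [show 2 * (i + 1 + d) - (2 * i + 1) = 2 * d + 1 by omega] at h2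
    rw [show i + 1 + d - i = d + 1 by omega] at h3
    rw [show 2 * (i + 1) = 2 * i + 1 + 1 by ring]
    generalize Nat.choose (2 * (i + 1 + d)) (2 * i + 1 + 1) = C2 at *
    generalize Nat.choose (2 * (i + 1 + d)) (2 * i + 1) = C1 at *
    generalize Nat.choose (2 * (i + 1 + d)) (2 * i) = C0 at *
    generalize Nat.choose (i + 1 + d) (i + 1) = D1 at *
    generalize Nat.choose (i + 1 + d) i = D0 at *
    have h1 : (C1 : ℝ) * (2 * i + 1) = C0 * (2 * d + 2) := by exact_mod_cast h1
    have h2 : (C2 : ℝ) * (2 * i + 1 + 1) = C1 * (2 * d + 1) := by exact_mod_cast h2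
    have h3 : (D1 : ℝ) * (i + 1) = D0 * (d + 1) := by exact_mod_cast h3
    push_cast at ih ⊢
    set w : ℝ := 2 * ((i : ℝ) + 1 + d) with hw
    have hi0 : (0 : ℝ) ≤ i := by positivity
    have hd0 : (0 : ℝ) ≤ d := by positivity
    have hE : (0 : ℝ) ≤ D0 * w ^ i := by positivity
    have key : (C2 : ℝ) * ((i + 1) * (2 * i + 1))
        = C0 * ((d + 1) * (2 * d + 1)) := by
      linear_combination (2 * i + 1) / 2 * h2 + (2 * d + 1) / 2 * h1
    have hb : (2 * (d : ℝ) + 1) ≤ w * (2 * i + 1) := by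
      rw [hw]; nlinarith [mul_nonneg hi0 hi0, mul_nonneg hi0 hd0]
    refine le_of_mul_le_mul_right (a := ((i : ℝ) + 1) * (2 * i + 1)) ?_ (by positivity)
    calc (C2 : ℝ) * ((i + 1) * (2 * i + 1)) = C0 * ((d + 1) * (2 * d + 1)) := key
      _ ≤ (D0 * w ^ i) * ((d + 1) * (w * (2 * i + 1))) := by gcongr
      _ = D1 * w ^ (i + 1) * ((i + 1) * (2 * i + 1)) := by
        linear_combination (-(w ^ (i + 1) * (2 * i + 1))) * h3

lemma sum_range_even_odd (f : ℕ → ℝ) (j : ℕ) :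
    ∑ l ∈ range (2 * j + 1), f l
      = ∑ i ∈ range (j + 1), f (2 * i) + ∑ i ∈ range j, f (2 * i + 1) := by
  induction j with
  | zero => simp
  | succ j ih =>
    rw [show 2 * (j + 1) + 1 = 2 * j + 1 + 1 + 1 by ring, sum_range_succ, sum_range_succ, ih,
      sum_range_succ _ (j + 1), sum_range_succ (fun i => f (2 * i + 1)) j,
      show 2 * (j + 1) = 2 * j + 1 + 1 by ring]
    ring

/-- Two-point inequality: the `2j`-th moment of `a + ε`, for a uniform sign `ε`, is at most
`(a² + c)^j` once `c ≥ 2j`. -/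
lemma two_point (a c : ℝ) (j : ℕ) (hc : 2 * (j : ℝ) ≤ c) :
    (((a + 1) ^ 2) ^ j + ((a - 1) ^ 2) ^ j) / 2 ≤ (a ^ 2 + c) ^ j := by
  have h1 : (((a + 1) ^ 2) ^ j + ((a - 1) ^ 2) ^ j) / 2
      = ∑ i ∈ range (j + 1), (Nat.choose (2 * j) (2 * i) : ℝ) * (a ^ 2) ^ (j - i) := by
    rw [← pow_mul, ← pow_mul, show a + 1 = 1 + a by ring, show a - 1 = -1 + a by ring,
      add_pow, add_pow, sum_range_even_odd, sum_range_even_odd]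
    have e1 : ∀ i, (-1 : ℝ) ^ (2 * i) = 1 := fun i => by simp [pow_mul]
    have e2 : ∀ i, (-1 : ℝ) ^ (2 * i + 1) = -1 := fun i => by simp [pow_succ, pow_mul]
    simp only [e1, e2, one_pow, one_mul, neg_mul, sum_neg_distrib]
    have e3 : ∀ i, a ^ (2 * j - 2 * i) = (a ^ 2) ^ (j - i) := fun i => by
      rw [← pow_mul, Nat.mul_sub]
    simp only [e3, mul_comm ((a ^ 2) ^ _)]
    ring
  rw [h1, add_comm (a ^ 2) c, add_pow]
  refine sum_le_sum fun i hi => ?_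
  have hi' : i ≤ j := Nat.le_of_lt_succ (mem_range.1 hi)
  calc (Nat.choose (2 * j) (2 * i) : ℝ) * (a ^ 2) ^ (j - i)
      ≤ (Nat.choose j i * c ^ i) * (a ^ 2) ^ (j - i) := by
        gcongr
        exact (choose_two_mul_le j i hi').trans (by gcongr)
    _ = _ := by ring

/-- `two_point` shifted by `s ≥ 0`. This is Minkowski's inequality in `L^m` applied to
`(a + ε)² + s`. -/
lemma two_point_shift (a c s : ℝ) (m : ℕ) (hc : 2 * (m : ℝ) ≤ c) (hs : 0 ≤ s) :
    (((a + 1) ^ 2 + s) ^ m + ((a - 1) ^ 2 + s) ^ m) / 2 ≤ (a ^ 2 + c + s) ^ m := by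
  rw [add_pow _ s, add_pow _ s, add_pow _ s, ← sum_add_distrib, sum_div]
  refine sum_le_sum fun j hj => ?_
  have hj' : j ≤ m := Nat.le_of_lt_succ (mem_range.1 hj)
  have h := two_point a c j (le_trans (by gcongr) hc)
  calc _ = (((a + 1) ^ 2) ^ j + ((a - 1) ^ 2) ^ j) / 2 * (s ^ (m - j) * m.choose j) := by ring
    _ ≤ (a ^ 2 + c) ^ j * (s ^ (m - j) * m.choose j) := by gcongr
    _ = _ := by ring

/-- The cube point `y` with its `i`-th coordinate negated. -/
def flipAt {n : ℕ} (i : Fin n) (y : Cube n) : Cube n := Function.update y i (!y i)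

lemma flipAt_flipAt {n : ℕ} (i : Fin n) (y : Cube n) : flipAt i (flipAt i y) = y := by
  simp [flipAt]

lemma flipAt_ne {n : ℕ} {i j : Fin n} (h : j ≠ i) (y : Cube n) : flipAt i y j = y j := by
  simp [flipAt, h]

lemma bval_flipAt {n : ℕ} (i : Fin n) (y : Cube n) : bval (flipAt i y i) = -bval (y i) := by
  cases h : y i <;> simp [flipAt, bval, h]

lemma sum_flipAt {n : ℕ} (i : Fin n) (F : Cube n → ℝ) : ∑ y, F (flipAt i y) = ∑ y, F y :=
  Equiv.sum_comp ⟨flipAt i, flipAt i, flipAt_flipAt i, flipAt_flipAt i⟩ F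

lemma bval_mul_cases (b b' : Bool) : bval b * bval b' = 1 ∨ bval b * bval b' = -1 := by
  cases b <;> cases b' <;> simp [bval]

/-- Peeling off the coordinates in `T`, on which neither `p` nor `a` depends: each one costs
an additive `c` inside the `m`-th power. -/
lemma moment_peel {n : ℕ} (p : Cube n → ℝ) (hp : ∀ y, 0 ≤ p y) (x : Cube n) (m : ℕ) (c : ℝ)
    (hc : 2 * (m : ℝ) ≤ c) (T : Finset (Fin n)) :
    (∀ i ∈ T, ∀ y, p (flipAt i y) = p y) →
    ∀ a : Cube n → ℝ, (∀ i ∈ T, ∀ y, a (flipAt i y) = a y) →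
    ∑ y, p y * ((a y + ∑ i ∈ T, bval (x i) * bval (y i)) ^ 2) ^ m
      ≤ ∑ y, p y * (a y ^ 2 + c * T.card) ^ m := by
  have hc0 : 0 ≤ c := le_trans (by positivity) hc
  induction T using Finset.induction_on with
  | empty => intro _ a _; simp
  | insert i T hi ih =>
    intro hpT a ha
    have h1 := ih (fun j hj => hpT j (mem_insert_of_mem hj))
      (fun y => a y + bval (x i) * bval (y i)) (fun j hj y => by
        have hij : i ≠ j := fun h => hi (h ▸ hj)
        simp only [ha j (mem_insert_of_mem hj), flipAt_ne hij])
    simp only [sum_insert hi, card_insert_of_notMem hi, ← add_assoc]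
    refine h1.trans ?_
    set F : Cube n → ℝ := fun y =>
      p y * ((a y + bval (x i) * bval (y i)) ^ 2 + c * T.card) ^ m with hF
    -- Average each `y` with its flip in direction `i`.
    have h2 : ∑ y, F y = ∑ y, (F y + F (flipAt i y)) / 2 := by
      rw [← sum_div, sum_add_distrib, sum_flipAt]; ring
    rw [h2]
    refine sum_le_sum fun y _ => ?_
    have h3 := two_point_shift (a y) c (c * T.card) m hc (by positivity)
    have h4 : (F y + F (flipAt i y)) / 2 = p y * ((((a y + 1) ^ 2 + c * T.card) ^ m
        + ((a y - 1) ^ 2 + c * T.card) ^ m) / 2) := by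
      simp only [hF, hpT i (mem_insert_self _ _), ha i (mem_insert_self _ _), bval_flipAt, mul_neg]
      rcases bval_mul_cases (x i) (y i) with h | h <;> rw [h] <;> ring
    rw [h4]
    push_cast
    rw [show a y ^ 2 + c * ((T.card : ℝ) + 1) = a y ^ 2 + c + c * T.card by ring]
    exact mul_le_mul_of_nonneg_left h3 (hp y)

lemma tensorNormSq_eq {n : ℕ} (p : Cube n → ℝ) (r : ℕ) :
    tensorNormSq p r = ∑ x, p x * ∑ y, p y * innerB x y ^ 2 ^ r := by
  unfold tensorNormSq innerB
  simp only [Fintype.sum_pow, sq (∑ _, _), sum_mul_sum]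
  simp only [mul_sum, prod_mul_distrib]
  rw [sum_comm]
  refine sum_congr rfl fun x _ => ?_
  rw [sum_comm]
  refine sum_congr rfl fun y _ => sum_congr rfl fun I _ => ?_
  ring

/-- The even moments of `⟨x, y⟩` over `y ∼ p`, for a fixed cube point `x`. -/
lemma moment_le {n k : ℕ} (p : Cube n → ℝ) (hp : IsDist p) (hj : IsJuntaDist k p)
    (x : Cube n) (m : ℕ) :
    ∑ y, p y * innerB x y ^ (2 * m) ≤ ((k : ℝ) ^ 2 + 2 * m * n) ^ m := by
  obtain ⟨J, hJk, hJ⟩ := hj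
  have h := moment_peel p hp.1 x m (2 * m) le_rfl Jᶜ
    (fun i hi y => hJ _ _ fun j hj' => flipAt_ne (by rintro rfl; simp_all) y)
    (fun y => ∑ i ∈ J, bval (x i) * bval (y i))
    (fun i hi y => sum_congr rfl fun j hj' => by
      rw [flipAt_ne (by rintro rfl; simp_all) y])
  simp only [sum_add_sum_compl, ← pow_mul] at h
  refine h.trans ?_
  have hcard : ((Jᶜ.card : ℕ) : ℝ) ≤ n := by
    exact_mod_cast (card_le_univ _).trans (by simp)
  have hle : ∀ y : Cube n, (∑ i ∈ J, bval (x i) * bval (y i)) ^ 2 ≤ (k : ℝ) ^ 2 := fun y => by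
    refine sq_le_sq.2 ?_
    rw [abs_of_nonneg (Nat.cast_nonneg k : (0 : ℝ) ≤ k)]
    calc _ ≤ ∑ i ∈ J, |bval (x i) * bval (y i)| := abs_sum_le_sum_abs _ _
      _ = ∑ i ∈ J, (1 : ℝ) := sum_congr rfl fun i _ => by
        rcases bval_mul_cases (x i) (y i) with h | h <;> simp [h]
      _ ≤ k := by simpa using hJk
  calc _ ≤ ∑ y, p y * ((k : ℝ) ^ 2 + 2 * m * n) ^ m := by
        refine sum_le_sum fun y _ => mul_le_mul_of_nonneg_left ?_ (hp.1 y)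
        have := hle y
        gcongr
    _ = _ := by rw [← sum_mul, hp.2, one_mul]

/-- If `p` is a `k`-junta distribution on `{-1,1}^n`, then for every
`r ≥ 1`, `‖μ(⊙^r(p))‖₂² ≤ (2·max{n,k²}·2^r)^{2^{r-1}}`. -/
theorem statement11 (n k : ℕ) (p : Cube n → ℝ) (hp : IsDist p) (hj : IsJuntaDist k p)
    (r : ℕ) (hr : 1 ≤ r) :
    tensorNormSq p r ≤ (2 * max (n : ℝ) ((k : ℝ) ^ 2) * 2 ^ r) ^ 2 ^ (r - 1) := by
  have hR : 2 ^ r = 2 * 2 ^ (r - 1) := by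
    rw [← pow_succ', Nat.sub_add_cancel hr]
  have hRr : (2 : ℝ) ^ r = 2 * 2 ^ (r - 1) := by exact_mod_cast hR
  rw [tensorNormSq_eq, hR]
  set M := max (n : ℝ) ((k : ℝ) ^ 2) with hM
  have hn : (n : ℝ) ≤ M := le_max_left _ _
  have hk : (k : ℝ) ^ 2 ≤ M := le_max_right _ _
  have hM0 : 0 ≤ M := le_trans (by positivity) hn
  have hm : (1 : ℝ) ≤ 2 ^ (r - 1) := one_le_pow₀ (by norm_num)
  calc _ ≤ ∑ x, p x * ((k : ℝ) ^ 2 + 2 * (2 ^ (r - 1) : ℕ) * n) ^ 2 ^ (r - 1) :=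
        sum_le_sum fun x _ => mul_le_mul_of_nonneg_left (moment_le p hp hj x _) (hp.1 x)
    _ = ((k : ℝ) ^ 2 + 2 * (2 ^ (r - 1) : ℕ) * n) ^ 2 ^ (r - 1) := by
        rw [← sum_mul, hp.2, one_mul]
    _ ≤ _ := by
        gcongr
        rw [hRr]
        push_cast
        generalize (2 : ℝ) ^ (r - 1) = w at *
        nlinarith [mul_le_mul_of_nonneg_left hn (by linarith : 0 ≤ w),
          mul_le_mul_of_nonneg_left hm hM0]

end JuntaPaper
end

section
/- There exist constants C > 0 and n₀ ∈ ℕ such that the following holds for all n ≥ n₀, k ∈ ℕ and ε ∈ (0,1). Let p be any distribution on {−1,1}^n with ‖μ(p)‖₂ ≥ ε·√n. Set q = ⌈C·max{(k+√n)/(ε²·n), (k+√n)/(ε·√n)}⌉, r₀ = ⌈log₂ log₂ n⌉, τ_0 = ε²·n/2, and τ_r = q²·τ_{r−1}²/5000 for r ≥ 1, and let Z^(r) be the statistic built from 2q independent samples of p. Then there exists r ∈ {0, 1, …, r₀} with Pr[Z^(r) > τ_r] ≥ 2/3. -/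
/-!
For `R = 2 ^ r` let `M_r = 𝔼 ⟨X, Y⟩ ^ R` be the mean of `Z^(r)`.  The kernel `⟨x, y⟩ ^ R` is the
Gram kernel of the tensor powers `x^{⊗R}`, so `M_r` is the squared norm of the `R`-th tensor mean
`m`.  A direct computation of the second moment (`Esamp_sq`) gives
`Var Z^(r) ≤ M_{r+1} / q² + 2 V / q`, where `V = 𝔼_x ⟨x^{⊗R}, m⟩²`, and Cauchy–Schwarz
(`cross_sq_le`) gives `V ≤ M_r √M_{r+1}`.

If the test at level `r` fails, i.e. `Pr[Z^(r) > τ_r] < 2/3`, while `M_r ≥ 2 τ_r`, then Chebyshev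
forces `Var Z^(r) > M_r² / 12`, hence `M_{r+1} ≥ q² M_r² / 601` (`mom_step`), which also yields
`M_{r+1} ≥ 2 τ_{r+1}`.  So if all levels `0, …, r₀` fail, then the normalised moments
`q² M_r / 601` square at every step, and
`q² M_r / 601 ≥ (q² ε² n / 601) ^ (2 ^ r)` for `r = r₀ + 1`.
The choice of `q` makes `q² ε² / 601 ≥ 16`, and `2 ^ (r₀ + 1) ≥ 2 log₂ n`, so this contradicts the
trivial bound `M_r ≤ n ^ (2 ^ r)`.
-/

open Finset

namespace JuntaPaper

/-! ### Second moments of sums of independent samples -/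

/-- Expectation of `F (X₁, …, X_q)` over `q` independent samples from the weights `p`. -/
noncomputable def EX {α : Type*} [Fintype α] (p : α → ℝ) (q : ℕ) (F : (Fin q → α) → ℝ) : ℝ :=
  ∑ X : Fin q → α, (∏ i, p (X i)) * F X

lemma EX_succ {α : Type*} [Fintype α] (p : α → ℝ) (q : ℕ) (F : (Fin (q + 1) → α) → ℝ) :
    EX p (q + 1) F = ∑ x, p x * EX p q (fun X => F (Fin.cons x X)) := by
  unfold EX
  rw [← (Fin.consEquiv (fun _ : Fin (q + 1) => α)).sum_comp, Fintype.sum_prod_type]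
  refine Finset.sum_congr rfl fun x _ => ?_
  rw [Finset.mul_sum]
  refine Finset.sum_congr rfl fun X _ => ?_
  simp [Fin.consEquiv, Fin.prod_univ_succ, mul_assoc]

lemma EX_add {α : Type*} [Fintype α] (p : α → ℝ) (q : ℕ) (F G : (Fin q → α) → ℝ) :
    EX p q (fun X => F X + G X) = EX p q F + EX p q G := by
  simp [EX, mul_add, Finset.sum_add_distrib]

lemma EX_const_mul {α : Type*} [Fintype α] (p : α → ℝ) (q : ℕ) (c : ℝ) (F : (Fin q → α) → ℝ) :
    EX p q (fun X => c * F X) = c * EX p q F := by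
  simp only [EX, Finset.mul_sum]
  exact Finset.sum_congr rfl fun X _ => by ring

lemma EX_sum {α β : Type*} [Fintype α] [Fintype β] (p : α → ℝ) (q : ℕ)
    (F : β → (Fin q → α) → ℝ) :
    EX p q (fun X => ∑ b, F b X) = ∑ b, EX p q (F b) := by
  simp only [EX, Finset.mul_sum]
  exact Finset.sum_comm

lemma EX_const {α : Type*} [Fintype α] (p : α → ℝ) (hp : ∑ x, p x = 1) (q : ℕ) (c : ℝ) :
    EX p q (fun _ => c) = c := by
  induction q with
  | zero => simp [EX]
  | succ q ih => rw [EX_succ]; simp [ih, ← Finset.sum_mul, hp]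

lemma EX_lin {α : Type*} [Fintype α] (p : α → ℝ) (hp : ∑ x, p x = 1) (q : ℕ) (h : α → ℝ) :
    EX p q (fun X => ∑ i, h (X i)) = q * ∑ x, p x * h x := by
  induction q with
  | zero => simp [EX]
  | succ q ih =>
    rw [EX_succ]
    simp only [Fin.sum_univ_succ, Fin.cons_zero, Fin.cons_succ, EX_add, EX_const p hp, ih, mul_add,
      Finset.sum_add_distrib, ← Finset.sum_mul, hp]
    push_cast
    ring

lemma EX_sq {α : Type*} [Fintype α] (p : α → ℝ) (hp : ∑ x, p x = 1) (q : ℕ) (h : α → ℝ) :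
    EX p q (fun X => (∑ i, h (X i)) ^ 2)
      = q * ∑ x, p x * h x ^ 2 + q * (q - 1) * (∑ x, p x * h x) ^ 2 := by
  induction q with
  | zero => simp [EX]
  | succ q ih =>
    rw [EX_succ]
    have key : ∀ x, EX p q (fun X => (∑ i, h ((Fin.cons x X : Fin (q + 1) → α) i)) ^ 2)
        = h x ^ 2 + 2 * h x * (q * ∑ x, p x * h x)
          + (q * ∑ x, p x * h x ^ 2 + q * (q - 1) * (∑ x, p x * h x) ^ 2) := by
      intro x
      rw [← ih, ← EX_lin p hp, ← EX_const_mul, ← EX_const p hp q (h x ^ 2), ← EX_add, ← EX_add]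
      congr 1
      funext X
      simp only [Fin.sum_univ_succ, Fin.cons_zero, Fin.cons_succ]
      ring
    simp only [key]
    set m := ∑ x, p x * h x
    set v := ∑ x, p x * h x ^ 2
    have : ∀ x, p x * (h x ^ 2 + 2 * h x * (q * m) + (q * v + q * (q - 1) * m ^ 2))
        = p x * h x ^ 2 + (p x * h x) * (2 * (q * m)) + p x * (q * v + q * (q - 1) * m ^ 2) := by
      intro x; ring
    simp only [this, Finset.sum_add_distrib, ← Finset.sum_mul, hp]
    change v + m * _ + _ = _
    push_cast
    ring

lemma Esamp_eq {n : ℕ} (p : Cube n → ℝ) (q : ℕ) (F : (Fin q → Cube n) → (Fin q → Cube n) → ℝ) :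
    Esamp p q F = EX p q (fun X => EX p q (fun Y => F X Y)) := by
  unfold Esamp EX
  refine Finset.sum_congr rfl fun X _ => ?_
  rw [Finset.mul_sum]
  exact Finset.sum_congr rfl fun Y _ => by ring

lemma Esamp_lin {n : ℕ} (p : Cube n → ℝ) (hp : ∑ x, p x = 1) (q : ℕ) (f : Cube n → Cube n → ℝ) :
    Esamp p q (fun X Y => ∑ i, ∑ j, f (X i) (Y j))
      = q ^ 2 * ∑ x, ∑ y, p x * p y * f x y := by
  rw [Esamp_eq]
  simp only [EX_sum, EX_lin p hp]
  have h := EX_lin p hp q (fun x => q * ∑ y, p y * f x y)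
  simp only [EX_sum] at h
  rw [h]
  simp only [Finset.mul_sum]
  exact Finset.sum_congr rfl fun X _ => Finset.sum_congr rfl fun Y _ => by ring

/-- Second moment of `∑_{i,j} f (X_i, Y_j)`: the pairs of index pairs are split according to
whether they share both, one, or no coordinate. -/
lemma Esamp_sq {n : ℕ} (p : Cube n → ℝ) (hp : ∑ x, p x = 1) (q : ℕ) (f : Cube n → Cube n → ℝ)
    (hf : ∀ x y, f x y = f y x) :
    Esamp p q (fun X Y => (∑ i, ∑ j, f (X i) (Y j)) ^ 2)
      = q ^ 2 * (∑ x, ∑ y, p x * p y * f x y ^ 2)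
        + 2 * q ^ 2 * (q - 1) * (∑ x, p x * (∑ y, p y * f x y) ^ 2)
        + q ^ 2 * (q - 1) ^ 2 * (∑ x, ∑ y, p x * p y * f x y) ^ 2 := by
  rw [Esamp_eq]
  have h1 : ∀ X : Fin q → Cube n, EX p q (fun Y => (∑ i, ∑ j, f (X i) (Y j)) ^ 2)
      = q * ∑ y, p y * (∑ i, f (X i) y) ^ 2
        + q * (q - 1) * (∑ i, ∑ y, p y * f (X i) y) ^ 2 := by
    intro X
    have := EX_sq p hp q (fun y => ∑ i, f (X i) y)
    have e : ∀ Y : Fin q → Cube n, ∑ i, ∑ j, f (X i) (Y j) = ∑ j, ∑ i, f (X i) (Y j) :=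
      fun Y => Finset.sum_comm
    have e2 : ∑ i, ∑ y, p y * f (X i) y = ∑ y, p y * ∑ i, f (X i) y := by
      rw [Finset.sum_comm]; simp only [Finset.mul_sum]
    simp only [e, e2]
    exact this
  simp only [h1, EX_add, EX_const_mul, EX_sum]
  have h2 : ∀ y, EX p q (fun X => (∑ i, f (X i) y) ^ 2)
      = q * ∑ x, p x * f x y ^ 2 + q * (q - 1) * (∑ x, p x * f x y) ^ 2 :=
    fun y => EX_sq p hp q (fun x => f x y)
  have h3 := EX_sq p hp q (fun x => ∑ y, p y * f x y)
  rw [h3]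
  simp only [h2]
  have e1 : ∑ y, p y * (q * ∑ x, p x * f x y ^ 2 + q * (q - 1) * (∑ x, p x * f x y) ^ 2)
      = q * (∑ x, ∑ y, p x * p y * f x y ^ 2)
        + q * (q - 1) * ∑ x, p x * (∑ y, p y * f x y) ^ 2 := by
    simp only [mul_add, Finset.sum_add_distrib]
    congr 1
    · simp only [Finset.mul_sum]
      refine Finset.sum_congr rfl fun x _ => Finset.sum_congr rfl fun y _ => ?_
      rw [hf x y]; ring
    · rw [Finset.mul_sum]
      refine Finset.sum_congr rfl fun x _ => ?_
      simp only [fun y => hf y x]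
      ring
  have e2 : ∑ x, p x * ∑ y, p y * f x y = ∑ x, ∑ y, p x * p y * f x y := by
    simp only [Finset.mul_sum, mul_assoc]
  rw [e1, e2]
  ring

/-! ### Cauchy–Schwarz in the feature space -/

lemma gram_mean {α ι : Type*} [Fintype α] [Fintype ι] (p : α → ℝ) (φ : α → ι → ℝ) :
    ∑ x, ∑ y, p x * p y * (∑ I, φ x I * φ y I) = ∑ I, (∑ x, p x * φ x I) ^ 2 := by
  symm
  simp only [sq, Finset.sum_mul_sum]
  rw [Finset.sum_comm]
  refine Finset.sum_congr rfl fun x _ => ?_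
  rw [Finset.sum_comm]
  refine Finset.sum_congr rfl fun y _ => ?_
  rw [Finset.mul_sum]
  exact Finset.sum_congr rfl fun I _ => by ring

lemma gram_cross {α ι : Type*} [Fintype α] [Fintype ι] (p : α → ℝ) (φ : α → ι → ℝ) :
    ∑ x, p x * (∑ y, p y * (∑ I, φ x I * φ y I)) ^ 2
      = ∑ P : ι × ι, ((∑ x, p x * φ x P.1) * (∑ x, p x * φ x P.2))
          * (∑ x, p x * (φ x P.1 * φ x P.2)) := by
  have h : ∀ x, ∑ y, p y * (∑ I, φ x I * φ y I) = ∑ I, φ x I * ∑ y, p y * φ y I := by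
    intro x
    simp only [Finset.mul_sum]
    rw [Finset.sum_comm]
    exact Finset.sum_congr rfl fun y _ => Finset.sum_congr rfl fun I _ => by ring
  simp only [h]
  generalize hm : (fun I => ∑ y, p y * φ y I) = m
  have hm' : ∀ I, ∑ y, p y * φ y I = m I := fun I => congrFun hm I
  have hs : ∀ x, (∑ I, φ x I * m I) ^ 2
      = ∑ P : ι × ι, (φ x P.1 * m P.1) * (φ x P.2 * m P.2) := by
    intro x
    rw [sq, Finset.sum_mul_sum, Fintype.sum_prod_type]
  simp only [hm', hs, Finset.mul_sum]
  rw [Finset.sum_comm]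
  exact Finset.sum_congr rfl fun y _ => Finset.sum_congr rfl fun I _ => by ring

/-- For a Gram kernel `f x y = ⟨φ x, φ y⟩`, the cross term is the quadratic form of the second
moment matrix of `φ` at the mean of `φ`, hence at most `‖mean‖²` times the Frobenius norm of that
matrix, and that norm squares to `𝔼 f²`. -/
lemma cross_sq_le {α ι : Type*} [Fintype α] [Fintype ι] (p : α → ℝ) (φ : α → ι → ℝ)
    (f : α → α → ℝ) (hf : ∀ x y, f x y = ∑ I, φ x I * φ y I) :
    (∑ x, p x * (∑ y, p y * f x y) ^ 2) ^ 2
      ≤ (∑ x, ∑ y, p x * p y * f x y) ^ 2 * ∑ x, ∑ y, p x * p y * f x y ^ 2 := by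
  have hf2 : ∀ x y, f x y ^ 2 = ∑ P : ι × ι, (φ x P.1 * φ x P.2) * (φ y P.1 * φ y P.2) := by
    intro x y
    rw [hf, sq, Finset.sum_mul_sum, Fintype.sum_prod_type]
    exact Finset.sum_congr rfl fun y _ => Finset.sum_congr rfl fun I _ => by ring
  simp only [hf2]
  rw [gram_mean p (fun x (P : ι × ι) => φ x P.1 * φ x P.2)]
  simp only [hf]
  rw [gram_mean, gram_cross]
  refine (Finset.sum_mul_sq_le_sq_mul_sq _ _ _).trans (le_of_eq ?_)
  congr 1
  rw [sq, Finset.sum_mul_sum, Fintype.sum_prod_type]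
  exact Finset.sum_congr rfl fun y _ => Finset.sum_congr rfl fun I _ => by ring

/-! ### Moments of the inner product -/

/-- `𝔼 ⟨X, Y⟩ ^ R` for independent `X, Y ∼ p`. -/
noncomputable def mom {n : ℕ} (p : Cube n → ℝ) (R : ℕ) : ℝ :=
  ∑ x, ∑ y, p x * p y * innerB x y ^ R

lemma innerB_comm {n : ℕ} (x y : Cube n) : innerB x y = innerB y x := by
  simp [innerB, mul_comm]

lemma abs_innerB_le {n : ℕ} (x y : Cube n) : |innerB x y| ≤ n := by
  unfold innerB
  refine (Finset.abs_sum_le_sum_abs _ _).trans ?_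
  have : ∀ i, |bval (x i) * bval (y i)| ≤ 1 := by
    intro i
    unfold bval
    split_ifs <;> simp
  exact (Finset.sum_le_sum fun i _ => this i).trans (by simp)

lemma innerB_pow {n : ℕ} (R : ℕ) (x y : Cube n) :
    innerB x y ^ R = ∑ I : Fin R → Fin n, (∏ t, bval (x (I t))) * ∏ t, bval (y (I t)) := by
  simp only [innerB, Fintype.sum_pow, Finset.prod_mul_distrib]

lemma mom_le {n : ℕ} (p : Cube n → ℝ) (hp : IsDist p) (R : ℕ) : mom p R ≤ (n : ℝ) ^ R := by
  calc mom p R ≤ ∑ x, ∑ y, p x * p y * (n : ℝ) ^ R := by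
        refine Finset.sum_le_sum fun x _ => Finset.sum_le_sum fun y _ => ?_
        refine mul_le_mul_of_nonneg_left ?_ (mul_nonneg (hp.1 x) (hp.1 y))
        refine (le_abs_self _).trans ?_
        rw [abs_pow]
        exact pow_le_pow_left₀ (abs_nonneg _) (abs_innerB_le x y) R
    _ = (n : ℝ) ^ R := by
        simp only [← Finset.sum_mul, ← Finset.mul_sum, hp.2]
        simp

lemma mom_one {n : ℕ} (p : Cube n → ℝ) : mom p 1 = ∑ i, meanVec p i ^ 2 := by
  unfold mom meanVec
  simp only [pow_one, innerB]
  exact gram_mean p (fun x i => bval (x i))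

lemma cross_nonneg {n : ℕ} (p : Cube n → ℝ) (hp : IsDist p) (R : ℕ) :
    0 ≤ ∑ x, p x * (∑ y, p y * innerB x y ^ R) ^ 2 :=
  Finset.sum_nonneg fun x _ => mul_nonneg (hp.1 x) (sq_nonneg _)

lemma cross_le {n : ℕ} (p : Cube n → ℝ) (R : ℕ) :
    (∑ x, p x * (∑ y, p y * innerB x y ^ R) ^ 2) ^ 2 ≤ mom p R ^ 2 * mom p (2 * R) := by
  have := cross_sq_le p (fun x (I : Fin R → Fin n) => ∏ t, bval (x (I t)))
    (fun x y => innerB x y ^ R) (fun x y => innerB_pow R x y)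
  refine this.trans (le_of_eq ?_)
  simp only [mom, ← pow_mul, mul_comm 2 R]

/-! ### Chebyshev and the growth of the moments -/

lemma variance_le {n : ℕ} (p : Cube n → ℝ) (hp : IsDist p) (q : ℕ) (hq : 1 ≤ q) (r : ℕ) :
    Esamp p q (fun X Y => (Zstat q r X Y - mom p (2 ^ r)) ^ 2)
      ≤ mom p (2 ^ (r + 1)) / q ^ 2
        + 2 / q * ∑ x, p x * (∑ y, p y * innerB x y ^ (2 ^ r)) ^ 2 := by
  have hq' : (1 : ℝ) ≤ q := by exact_mod_cast hq
  have hq0 : (q : ℝ) ≠ 0 := by positivity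
  set M := mom p (2 ^ r) with hM
  set V := ∑ x, p x * (∑ y, p y * innerB x y ^ (2 ^ r)) ^ 2 with hV
  have hV0 : 0 ≤ V := cross_nonneg p hp _
  have h1 := Esamp_lin p hp.2 q (fun x y => innerB x y ^ (2 ^ r))
  have h2 := Esamp_sq p hp.2 q (fun x y => innerB x y ^ (2 ^ r)) (fun x y => by rw [innerB_comm])
  have h3 : ∑ x, ∑ y, p x * p y * (innerB x y ^ (2 ^ r)) ^ 2 = mom p (2 ^ (r + 1)) := by
    simp only [mom, ← pow_mul, pow_succ 2 r]
  rw [h3] at h2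
  change _ = _ + _ * V + _ * M ^ 2 at h2
  change _ = _ * M at h1
  have h0 : Esamp p q (fun _ _ => (1 : ℝ)) = 1 := by
    rw [Esamp_eq]; simp [EX_const p hp.2]
  have expand : Esamp p q (fun X Y => (Zstat q r X Y - M) ^ 2)
      = (1 / (q : ℝ) ^ 2) ^ 2
          * Esamp p q (fun X Y => (∑ i, ∑ j, innerB (X i) (Y j) ^ (2 ^ r)) ^ 2)
        - 2 * M * (1 / (q : ℝ) ^ 2) * Esamp p q (fun X Y => ∑ i, ∑ j, innerB (X i) (Y j) ^ (2 ^ r))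
        + M ^ 2 * Esamp p q (fun _ _ => (1 : ℝ)) := by
    unfold Esamp Zstat
    simp only [Finset.mul_sum (s := Finset.univ (α := Fin q → Cube n))]
    simp only [← Finset.sum_sub_distrib, ← Finset.sum_add_distrib]
    exact Finset.sum_congr rfl fun X _ => Finset.sum_congr rfl fun Y _ => by ring
  rw [expand, h0, h1, h2]
  have e : (1 / (q : ℝ) ^ 2) ^ 2 * (q ^ 2 * mom p (2 ^ (r + 1)) + 2 * q ^ 2 * (q - 1) * V
        + q ^ 2 * (q - 1) ^ 2 * M ^ 2) - 2 * M * (1 / (q : ℝ) ^ 2) * (q ^ 2 * M) + M ^ 2 * 1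
      = mom p (2 ^ (r + 1)) / q ^ 2 + 2 / q * V
        - (2 * V / q ^ 2 + (2 * q - 1) * M ^ 2 / q ^ 2) := by
    field_simp
    ring
  rw [e]
  have : 0 ≤ 2 * V / (q : ℝ) ^ 2 + (2 * q - 1) * M ^ 2 / q ^ 2 := by
    have : (0 : ℝ) ≤ 2 * q - 1 := by linarith
    positivity
  linarith

lemma chebyshev {n : ℕ} (p : Cube n → ℝ) (hp : IsDist p) (q r : ℕ) (τ : ℝ)
    (hM : 0 < mom p (2 ^ r)) (hτ : 2 * τ ≤ mom p (2 ^ r))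
    (hfail : Prsamp p q (fun X Y => τ < Zstat q r X Y) < 2 / 3) :
    mom p (2 ^ r) ^ 2 / 12 ≤ Esamp p q (fun X Y => (Zstat q r X Y - mom p (2 ^ r)) ^ 2) := by
  classical
  set M := mom p (2 ^ r)
  have h0 : Esamp p q (fun _ _ => (1 : ℝ)) = 1 := by
    rw [Esamp_eq]; simp [EX_const p hp.2]
  have key : M ^ 2 / 4 * (Esamp p q (fun _ _ => (1 : ℝ))
      - Prsamp p q (fun X Y => τ < Zstat q r X Y))
      ≤ Esamp p q (fun X Y => (Zstat q r X Y - M) ^ 2) := by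
    unfold Esamp Prsamp
    simp only [← Finset.sum_sub_distrib]
    simp only [Finset.mul_sum (s := Finset.univ (α := Fin q → Cube n))]
    refine Finset.sum_le_sum fun X _ => Finset.sum_le_sum fun Y _ => ?_
    have hw : 0 ≤ (∏ i, p (X i)) * ∏ j, p (Y j) :=
      mul_nonneg (Finset.prod_nonneg fun i _ => hp.1 _) (Finset.prod_nonneg fun i _ => hp.1 _)
    by_cases h : τ < Zstat q r X Y
    · simp only [h, if_true, sub_self, mul_zero]
      positivity
    · simp only [h, if_false, mul_zero, sub_zero, mul_one]
      rw [mul_comm]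
      refine mul_le_mul_of_nonneg_left ?_ hw
      push Not at h
      nlinarith
  rw [h0] at key
  nlinarith [sq_nonneg M]

/-- If level `r` of the test fails although its mean is at least twice the threshold, then the
next moment is large. -/
lemma mom_step {n : ℕ} (p : Cube n → ℝ) (hp : IsDist p) (q : ℕ) (hq : 1 ≤ q) (r : ℕ) (τ : ℝ)
    (hM : 0 < mom p (2 ^ r)) (hτ : 2 * τ ≤ mom p (2 ^ r))
    (hfail : Prsamp p q (fun X Y => τ < Zstat q r X Y) < 2 / 3) :
    (q : ℝ) ^ 2 * mom p (2 ^ r) ^ 2 / 601 ≤ mom p (2 ^ (r + 1)) := by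
  have h1 := chebyshev p hp q r τ hM hτ hfail
  have h2 := variance_le p hp q hq r
  have h3 := cross_le p (2 ^ r)
  have h4 := cross_nonneg p hp (2 ^ r)
  rw [← pow_succ'] at h3
  set M := mom p (2 ^ r)
  set N := mom p (2 ^ (r + 1))
  set V := ∑ x, p x * (∑ y, p y * innerB x y ^ (2 ^ r)) ^ 2
  have hq0 : (0 : ℝ) < q := by exact_mod_cast hq
  have h5 : M ^ 2 / 12 ≤ N / q ^ 2 + 2 / q * V := h1.trans h2
  by_contra! hlt
  -- `s² + 2 s < 1 / 12` for `s = 1 / √601`; the rational `51 / 1250` lies just above `1 / √601`.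
  have hV : V ≤ M * (q * M) * (51 / 1250) := by
    refine (abs_le_of_sq_le_sq' ?_ (by positivity)).2
    have : M ^ 2 * N ≤ M ^ 2 * (q ^ 2 * M ^ 2 / 601) :=
      mul_le_mul_of_nonneg_left hlt.le (sq_nonneg M)
    have hpos : 0 ≤ M ^ 2 * (q ^ 2 * M ^ 2) := by positivity
    nlinarith
  have hN : N / q ^ 2 < M ^ 2 / 601 := by
    rw [div_lt_iff₀ (by positivity)]
    linarith
  have hV' : 2 / q * V ≤ 2 * M ^ 2 * (51 / 1250) := by
    rw [div_mul_eq_mul_div, div_le_iff₀ hq0]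
    nlinarith
  have : 0 < M ^ 2 := by positivity
  nlinarith

/-- If all levels below `r` fail, the normalised moments `q² M / 601` have squared `r` times. -/
lemma mom_growth {n : ℕ} (hn : 0 < n) (p : Cube n → ℝ) (hp : IsDist p) (q : ℕ) (hq : 1 ≤ q)
    (ε : ℝ) (hε : 0 < ε) (h0 : ε ^ 2 * n ≤ mom p 1) (r₀ : ℕ)
    (hfail : ∀ r < r₀, Prsamp p q (fun X Y => tauSeq q ε n r < Zstat q r X Y) < 2 / 3) :
    ∀ r ≤ r₀, 2 * tauSeq q ε n r ≤ mom p (2 ^ r) ∧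
      ((q : ℝ) ^ 2 * ε ^ 2 / 601 * n) ^ (2 ^ r) ≤ (q : ℝ) ^ 2 * mom p (2 ^ r) / 601 := by
  have hq0 : (0 : ℝ) < q := by exact_mod_cast hq
  have hn0 : (0 : ℝ) < n := by exact_mod_cast hn
  intro r
  induction r with
  | zero =>
    intro _
    simp only [tauSeq, pow_zero, pow_one]
    refine ⟨by linarith, ?_⟩
    have := mul_le_mul_of_nonneg_left h0 (sq_nonneg (q : ℝ))
    linarith
  | succ r ih =>
    intro hr
    obtain ⟨hτ, hB⟩ := ih (by omega)
    have hpos : 0 < ((q : ℝ) ^ 2 * ε ^ 2 / 601 * n) ^ (2 ^ r) := by positivity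
    have hM : 0 < mom p (2 ^ r) := by
      by_contra! h
      nlinarith [mul_nonneg (sq_nonneg (q : ℝ)) (neg_nonneg.2 h)]
    have hτ0 : 0 ≤ tauSeq q ε n r := by
      cases r with
      | zero => simp only [tauSeq]; positivity
      | succ r => simp only [tauSeq]; positivity
    have hs := mom_step p hp q hq r _ hM hτ (hfail r (by omega))
    have hq2 : (0 : ℝ) < (q : ℝ) ^ 2 := by positivity
    constructor
    · simp only [tauSeq]
      have : (2 * tauSeq q ε n r) ^ 2 ≤ mom p (2 ^ r) ^ 2 := pow_le_pow_left₀ (by linarith) hτ 2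
      have h' := mul_le_mul_of_nonneg_left this hq2.le
      have : 0 ≤ (q : ℝ) ^ 2 * tauSeq q ε n r ^ 2 := by positivity
      nlinarith
    · have h1 := pow_le_pow_left₀ hpos.le hB 2
      rw [← pow_mul, ← pow_succ] at h1
      refine h1.trans ?_
      have h' := mul_le_mul_of_nonneg_left hs hq2.le
      calc ((q : ℝ) ^ 2 * mom p (2 ^ r) / 601) ^ 2
          = (q : ℝ) ^ 2 * ((q : ℝ) ^ 2 * mom p (2 ^ r) ^ 2 / 601) / 601 := by ring
        _ ≤ _ := by linarith

/-! ### The choice of parameters -/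

lemma sq_le_two_pow {n : ℕ} (hn : 4 ≤ n) :
    (n : ℝ) ^ 2 ≤ 2 ^ (2 ^ (⌈Real.logb 2 (Real.logb 2 n)⌉₊ + 1)) ∧
      1 ≤ ⌈Real.logb 2 (Real.logb 2 n)⌉₊ := by
  have hn4 : (4 : ℝ) ≤ n := by exact_mod_cast hn
  have hL : 2 ≤ Real.logb 2 n := by
    rw [Real.le_logb_iff_rpow_le (by norm_num) (by linarith)]
    norm_num
    linarith
  have hLL : 1 ≤ Real.logb 2 (Real.logb 2 n) := by
    rw [Real.le_logb_iff_rpow_le (by norm_num) (by linarith)]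
    simpa using hL
  set r₀ := ⌈Real.logb 2 (Real.logb 2 n)⌉₊ with hr
  have h1 : Real.logb 2 n ≤ 2 ^ r₀ := by
    have := Nat.le_ceil (Real.logb 2 (Real.logb 2 n))
    rw [← hr, Real.logb_le_iff_le_rpow (by norm_num) (by linarith), Real.rpow_natCast] at this
    exact this
  have h2 : (n : ℝ) ≤ 2 ^ (2 ^ r₀) := by
    rw [Real.logb_le_iff_le_rpow (by norm_num) (by linarith)] at h1
    have e : ((2 : ℝ) ^ r₀) = ((2 ^ r₀ : ℕ) : ℝ) := by push_cast; rfl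
    rwa [e, Real.rpow_natCast] at h1
  constructor
  · rw [pow_succ 2 r₀, pow_mul]
    exact pow_le_pow_left₀ (by positivity) h2 2
  · have h := hLL.trans (Nat.le_ceil _)
    rw [← hr] at h
    exact_mod_cast h

/-- The arithmetic that makes the lower bound on the last moment beat the trivial upper bound. -/
lemma final_ineq (n ε q : ℝ) (R : ℕ) (hn : 4 ≤ n) (hε : 0 < ε) (hq : 0 < q) (hR : 4 ≤ R)
    (hnR : n ^ 2 ≤ 2 ^ R) (h1 : 100 ≤ q * ε) (h2 : 100 ≤ q * ε ^ 2 * Real.sqrt n) :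
    q ^ 2 / 601 < (q ^ 2 * ε ^ 2 / 601) ^ R := by
  have hs : Real.sqrt n ^ 2 = n := Real.sq_sqrt (by linarith)
  set b := q ^ 2 * ε ^ 2 / 601 with hb
  have hb16 : 16 ≤ b := by rw [hb]; nlinarith
  -- `b² n · 601 ≥ q²`: this is the bound `q ε² √n ≥ 100`, squared.
  have hq2 : q ^ 2 / 601 ≤ b ^ 2 * n := by
    have h3 : (100 : ℝ) ^ 2 ≤ (q * ε ^ 2 * Real.sqrt n) ^ 2 := pow_le_pow_left₀ (by norm_num) h2 2
    rw [mul_pow, hs] at h3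
    have h4 := mul_le_mul_of_nonneg_left h3 (sq_nonneg q)
    rw [hb]
    have h5 : (q ^ 2 * ε ^ 2 / 601) ^ 2 * n = q ^ 2 * ((q * ε ^ 2) ^ 2 * n) / 601 ^ 2 := by ring
    rw [h5]
    nlinarith [sq_nonneg q]
  obtain ⟨m, rfl⟩ : ∃ m, R = m + 2 := ⟨R - 2, by omega⟩
  have h6 : n ^ 2 ≤ b ^ m := by
    calc n ^ 2 ≤ 2 ^ (m + 2) := hnR
      _ ≤ 2 ^ (4 * m) := pow_le_pow_right₀ (by norm_num) (by omega)
      _ = 16 ^ m := by rw [pow_mul]; norm_num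
      _ ≤ b ^ m := pow_le_pow_left₀ (by norm_num) hb16 m
  have hb2 : 0 < b ^ 2 := by positivity
  calc q ^ 2 / 601 ≤ b ^ 2 * n := hq2
    _ < b ^ 2 * n ^ 2 := mul_lt_mul_of_pos_left (by nlinarith) hb2
    _ ≤ b ^ 2 * b ^ m := mul_le_mul_of_nonneg_left h6 hb2.le
    _ = b ^ (m + 2) := by ring

/-- soundness of the robust mean tester.  There exist constants
`C > 0` and `n₀` such that for all `n ≥ n₀`, `k ∈ ℕ`, `ε ∈ (0,1)` and every
distribution `p` on `{-1,1}^n` with `‖μ(p)‖₂ ≥ ε√n`, setting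
`q = ⌈C·max{(k+√n)/(ε²n), (k+√n)/(ε√n)}⌉`, `r₀ = ⌈log₂ log₂ n⌉` and the thresholds
`τ_0 = ε²n/2`, `τ_r = q²τ_{r-1}²/5000`, there exists `r ∈ {0,…,r₀}` with
`Pr[Z^(r) > τ_r] ≥ 2/3`. -/
theorem statement13 :
    ∃ C : ℝ, 0 < C ∧ ∃ n₀ : ℕ, ∀ n : ℕ, n₀ ≤ n → ∀ k : ℕ, ∀ ε : ℝ, 0 < ε → ε < 1 →
      ∀ p : Cube n → ℝ, IsDist p →
      ε * Real.sqrt n ≤ Real.sqrt (∑ i, meanVec p i ^ 2) →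
      ∀ q : ℕ,
        q = ⌈C * max (((k : ℝ) + Real.sqrt n) / (ε ^ 2 * n))
              (((k : ℝ) + Real.sqrt n) / (ε * Real.sqrt n))⌉₊ →
      ∃ r ≤ ⌈Real.logb 2 (Real.logb 2 n)⌉₊,
        2 / 3 ≤ Prsamp p q (fun X Y => tauSeq q ε n r < Zstat q r X Y) := by
  refine ⟨100, by norm_num, 4, ?_⟩
  intro n hn k ε hε _ p hp hμ q hq
  have hn4 : (4 : ℝ) ≤ n := by exact_mod_cast hn
  have hsn : 0 < Real.sqrt n := Real.sqrt_pos.2 (by linarith)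
  have hsq : Real.sqrt n ^ 2 = n := Real.sq_sqrt (by linarith)
  have hk : (0 : ℝ) ≤ k := Nat.cast_nonneg k
  have hqle : 100 * max (((k : ℝ) + Real.sqrt n) / (ε ^ 2 * n))
      (((k : ℝ) + Real.sqrt n) / (ε * Real.sqrt n)) ≤ q := by
    rw [hq]; exact Nat.le_ceil _
  have h2 : 100 ≤ q * ε ^ 2 * Real.sqrt n := by
    have := (mul_le_mul_of_nonneg_left (le_max_left (((k : ℝ) + Real.sqrt n) / (ε ^ 2 * n))
      (((k : ℝ) + Real.sqrt n) / (ε * Real.sqrt n))) (by norm_num : (0 : ℝ) ≤ 100)).trans hqle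
    rw [← mul_div_assoc, div_le_iff₀ (by positivity)] at this
    refine le_of_mul_le_mul_right ?_ hsn
    calc 100 * Real.sqrt n ≤ 100 * (k + Real.sqrt n) := by linarith
      _ ≤ q * (ε ^ 2 * n) := this
      _ = q * ε ^ 2 * Real.sqrt n * Real.sqrt n := by rw [mul_assoc _ √(n : ℝ), ← sq, hsq]; ring
  have h1 : 100 ≤ q * ε := by
    have := (mul_le_mul_of_nonneg_left (le_max_right (((k : ℝ) + Real.sqrt n) / (ε ^ 2 * n))
      (((k : ℝ) + Real.sqrt n) / (ε * Real.sqrt n))) (by norm_num : (0 : ℝ) ≤ 100)).trans hqle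
    rw [← mul_div_assoc, div_le_iff₀ (by positivity)] at this
    refine le_of_mul_le_mul_right ?_ hsn
    linarith
  have hq0 : (0 : ℝ) < q := by
    by_contra! h
    nlinarith
  have hq1 : 1 ≤ q := by exact_mod_cast hq0
  have h0 : ε ^ 2 * n ≤ mom p 1 := by
    rw [mom_one]
    have h := pow_le_pow_left₀ (by positivity) hμ 2
    rwa [mul_pow, hsq, Real.sq_sqrt (Finset.sum_nonneg fun i _ => sq_nonneg _)] at h
  by_contra! hfail
  obtain ⟨hnR, hr1⟩ := sq_le_two_pow hn
  set r₀ := ⌈Real.logb 2 (Real.logb 2 n)⌉₊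
  obtain ⟨-, hB⟩ := mom_growth (by omega) p hp q hq1 ε hε h0 (r₀ + 1)
    (fun r hr => hfail r (by omega)) (r₀ + 1) le_rfl
  have hR : 4 ≤ 2 ^ (r₀ + 1) :=
    calc 4 = 2 ^ (1 + 1) := by norm_num
      _ ≤ 2 ^ (r₀ + 1) := Nat.pow_le_pow_right (by norm_num) (by omega)
  have hfin := final_ineq n ε q _ hn4 hε hq0 hR hnR h1 h2
  have hle := mom_le p hp (2 ^ (r₀ + 1))
  have hnpos : (0 : ℝ) < (n : ℝ) ^ (2 ^ (r₀ + 1)) := by positivity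
  rw [mul_pow] at hB
  have h3 := mul_lt_mul_of_pos_right hfin hnpos
  have h4 := mul_le_mul_of_nonneg_left hle (sq_nonneg (q : ℝ))
  linarith

end JuntaPaper
end

section
/- There is a universal constant c > 0 such that for every n ≥ 2 and every distribution p on {−1,1}^n, dtv(p, U) ≤ c · n · log n · E_{i∼Uniform([n])}[ E_{ρ∼D_{{i}}(p)}[ |μ(p|ρ)_i| ] ], where the inner expectation is over a restriction that fixes all coordinates except i according to a sample x ∼ p. -/
/-!
Write `x ⊕ S` for `x` with the bits in `S` flipped. Conditioning on all coordinates but `i` leaves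
a two-point distribution on `{x, x ⊕ {i}}`, so the inner expectation over `ρ` equals
`(1/2) ∑ x, |p x - p (x ⊕ {i})|` (`sum_mul_abs_condMean`), and it suffices to prove an `L¹` Poincaré
inequality on the cube (`sum_abs_sub_uniform_le`).

That inequality follows from a hybrid argument: flipping the bits of `S` one at a time and using
that each flip permutes the cube gives
`∑ x, |f x - f (x ⊕ S)| ≤ ∑ i ∈ S, ∑ x, |f x - f (x ⊕ {i})|` (`sum_abs_sub_flipOn_le`). Averaging
over all `S` replaces `f (x ⊕ S)` by the mean of `f`. The resulting bound has no factor `log n`;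
since `log n ≥ log 2 > 1/2`, the constant `c = 2` works.
-/

open Finset

namespace JuntaPaper

/-- The point `x` with the bits in `S` flipped. -/
def flipOn {n : ℕ} (S : Finset (Fin n)) (x : Cube n) : Cube n :=
  fun i => if i ∈ S then !(x i) else x i

lemma flipOn_flipOn {n : ℕ} (S : Finset (Fin n)) (x : Cube n) : flipOn S (flipOn S x) = x := by
  funext i
  by_cases h : i ∈ S <;> simp [flipOn, h]

lemma flipOn_insert {n : ℕ} {i : Fin n} {S : Finset (Fin n)} (hi : i ∉ S) (x : Cube n) :
    flipOn (insert i S) x = flipOn {i} (flipOn S x) := by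
  funext j
  by_cases h : j = i
  · subst h; simp [flipOn, hi]
  · simp [flipOn, h]

/-- Flipping the bits in `S` permutes the cube. -/
def flipEquiv {n : ℕ} (S : Finset (Fin n)) : Cube n ≃ Cube n :=
  ⟨flipOn S, flipOn S, flipOn_flipOn S, flipOn_flipOn S⟩

lemma sum_flipOn {n : ℕ} (S : Finset (Fin n)) (g : Cube n → ℝ) :
    ∑ x, g (flipOn S x) = ∑ x, g x :=
  Equiv.sum_comp (flipEquiv S) g

/-- For fixed `x`, each point of the cube is `flipOn S x` for exactly one `S`. -/
def flipSetEquiv {n : ℕ} (x : Cube n) : Finset (Fin n) ≃ Cube n where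
  toFun S := flipOn S x
  invFun y := univ.filter (fun i => x i ≠ y i)
  left_inv S := by
    ext i
    by_cases h : i ∈ S <;> simp [flipOn, h]
  right_inv y := by
    funext i
    cases hx : x i <;> cases hy : y i <;> simp [flipOn, hx, hy]

/-- The hybrid argument: flip the bits of `S` one at a time. -/
lemma sum_abs_sub_flipOn_le {n : ℕ} (f : Cube n → ℝ) (S : Finset (Fin n)) :
    ∑ x, |f x - f (flipOn S x)| ≤ ∑ i ∈ S, ∑ x, |f x - f (flipOn {i} x)| := by
  induction S using Finset.induction_on with
  | empty =>
    have h : ∀ x : Cube n, flipOn ∅ x = x := fun x => by funext i; simp [flipOn]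
    simp [h]
  | insert i S hi ih =>
    rw [Finset.sum_insert hi, ← sum_flipOn S (fun x => |f x - f (flipOn {i} x)|)]
    have h : ∑ x, |f x - f (flipOn (insert i S) x)| ≤
        ∑ x, (|f (flipOn S x) - f (flipOn {i} (flipOn S x))| + |f x - f (flipOn S x)|) := by
      refine Finset.sum_le_sum fun x _ => ?_
      rw [flipOn_insert hi, add_comm]
      exact abs_sub_le _ _ _
    rw [Finset.sum_add_distrib] at h
    linarith

/-- An `L¹` Poincaré inequality on the cube, for functions with sum `1`. -/
lemma sum_abs_sub_uniform_le {n : ℕ} (f : Cube n → ℝ) (hf : ∑ x, f x = 1) :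
    ∑ x, |f x - uniform n x| ≤ ∑ i, ∑ x, |f x - f (flipOn {i} x)| := by
  set B := ∑ i, ∑ x, |f x - f (flipOn {i} x)| with hB
  have hS : ∀ S : Finset (Fin n), ∑ x, |f x - f (flipOn S x)| ≤ B := fun S =>
    (sum_abs_sub_flipOn_le f S).trans <|
      Finset.sum_le_sum_of_subset_of_nonneg (Finset.subset_univ S)
        fun i _ _ => Finset.sum_nonneg fun x _ => abs_nonneg _
  have hpos : (0 : ℝ) < 2 ^ n := by positivity
  have hpt : ∀ x, 2 ^ n * |f x - uniform n x| ≤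
      ∑ S : Finset (Fin n), |f x - f (flipOn S x)| := by
    intro x
    have hsum : ∑ S : Finset (Fin n), f (flipOn S x) = 1 := by
      rw [← hf]; exact Equiv.sum_comp (flipSetEquiv x) f
    have h : 2 ^ n * (f x - uniform n x) =
        ∑ S : Finset (Fin n), (f x - f (flipOn S x)) := by
      rw [Finset.sum_sub_distrib, hsum]
      simp [uniform, mul_sub]
    rw [← abs_of_pos hpos, ← abs_mul, h]
    exact Finset.abs_sum_le_sum_abs _ _
  have h : 2 ^ n * ∑ x, |f x - uniform n x| ≤ 2 ^ n * B := by
    rw [Finset.mul_sum]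
    refine (Finset.sum_le_sum fun x _ => hpt x).trans ?_
    rw [Finset.sum_comm]
    refine (Finset.sum_le_sum fun S _ => hS S).trans ?_
    simp
  exact le_of_mul_le_mul_left h hpos

lemma flipOn_singleton_ne {n : ℕ} (i : Fin n) (x : Cube n) : x ≠ flipOn {i} x := fun h => by
  simpa [flipOn] using congrFun h i

lemma agrees_restrictOn_singleton {n : ℕ} (i : Fin n) (x z : Cube n) :
    agrees (restrictOn {i} x) z ↔ z = x ∨ z = flipOn {i} x := by
  constructor
  · intro h
    have hz : ∀ j, j ≠ i → z j = x j := fun j hj => h j (x j) (by simp [restrictOn, hj])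
    by_cases hi : z i = x i
    · left
      funext j
      by_cases hj : j = i
      · rw [hj, hi]
      · exact hz j hj
    · right
      funext j
      by_cases hj : j = i
      · subst hj; simpa [flipOn] using Bool.eq_not_of_ne hi
      · simpa [flipOn, hj] using hz j hj
  · rintro (rfl | rfl) j b hb <;> by_cases hj : j = i <;> simp_all [restrictOn, flipOn]

lemma sum_agrees {n : ℕ} (i : Fin n) (x : Cube n) (g : Cube n → ℝ) :
    (∑ z, if agrees (restrictOn {i} x) z then g z else 0) = g x + g (flipOn {i} x) := by
  rw [← Finset.sum_filter, ← Finset.sum_pair (flipOn_singleton_ne i x)]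
  refine Finset.sum_congr ?_ fun _ _ => rfl
  ext z
  simp [agrees_restrictOn_singleton]

lemma abs_condMean {n : ℕ} {p : Cube n → ℝ} (hp : ∀ x, 0 ≤ p x) (i : Fin n) (x : Cube n) :
    |condMean p (restrictOn {i} x) i| =
      |p x - p (flipOn {i} x)| / (p x + p (flipOn {i} x)) := by
  have h : condMean p (restrictOn {i} x) i =
      (p x * bval (x i) + p (flipOn {i} x) * bval (flipOn {i} x i)) /
        (p x + p (flipOn {i} x)) := by
    unfold condMean condProb mass
    rw [sum_agrees i x p, ← sum_agrees i x (fun z => p z * bval (z i)), Finset.sum_div]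
    refine Finset.sum_congr rfl fun z _ => ?_
    split_ifs <;> ring
  rw [h, abs_div, abs_of_nonneg (add_nonneg (hp _) (hp _))]
  congr 1
  cases hx : x i
  · rw [abs_sub_comm]
    simp only [flipOn, bval, hx]
    congr 1
    simp
    ring
  · simp only [flipOn, bval, hx]
    congr 1
    simp
    ring

/-- Each edge `{x, flipOn {i} x}` contributes `|p x - p (flipOn {i} x)|` to the left side: the
normalization of the conditional law cancels the mass of the edge. Summing over vertices counts
every edge twice. -/
lemma sum_mul_abs_condMean {n : ℕ} {p : Cube n → ℝ} (hp : ∀ x, 0 ≤ p x) (i : Fin n) :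
    ∑ x, p x * |condMean p (restrictOn {i} x) i| =
      (1 / 2) * ∑ x, |p x - p (flipOn {i} x)| := by
  have hsymm := sum_flipOn {i} (fun x => p x * |condMean p (restrictOn {i} x) i|)
  have hadd : ∑ x, (p x * |condMean p (restrictOn {i} x) i| +
      p (flipOn {i} x) * |condMean p (restrictOn {i} (flipOn {i} x)) i|) =
      ∑ x, |p x - p (flipOn {i} x)| := by
    refine Finset.sum_congr rfl fun x _ => ?_
    rw [abs_condMean hp, abs_condMean hp, flipOn_flipOn, abs_sub_comm (p (flipOn {i} x)),
      add_comm (p (flipOn {i} x)), ← add_mul]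
    -- on an edge of mass zero both sides vanish
    rcases eq_or_ne (p x + p (flipOn {i} x)) 0 with h0 | h0
    · have h1 := hp x
      have h2 := hp (flipOn {i} x)
      have h3 : p x = 0 := by linarith
      have h4 : p (flipOn {i} x) = 0 := by linarith
      simp [h3, h4]
    · field_simp
  rw [Finset.sum_add_distrib] at hadd
  linarith

/-- There is a universal constant `c > 0` such that for every `n ≥ 2`
and every distribution `p` on `{-1,1}^n`,
`dtv(p,U) ≤ c·n·log n · E_{i∼[n]} E_{ρ∼D_{{i}}(p)} |μ(p|ρ)_i|`, where `ρ` fixes all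
coordinates except `i` according to a sample `x ∼ p`. -/
theorem statement15 :
    ∃ c : ℝ, 0 < c ∧ ∀ n : ℕ, 2 ≤ n → ∀ p : Cube n → ℝ, IsDist p →
      dtv p (uniform n) ≤
        c * n * Real.log n *
          ((n : ℝ)⁻¹ * ∑ i : Fin n, ∑ x, p x * |condMean p (restrictOn {i} x) i|) := by
  refine ⟨2, by norm_num, fun n hn p hp => ?_⟩
  have hB := sum_abs_sub_uniform_le p hp.2
  have hn0 : (n : ℝ) ≠ 0 := by positivity
  simp_rw [sum_mul_abs_condMean hp.1]
  rw [← Finset.mul_sum, dtv]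
  set B := ∑ i, ∑ x, |p x - p (flipOn {i} x)| with hBdef
  have hB0 : 0 ≤ B :=
    Finset.sum_nonneg fun i _ => Finset.sum_nonneg fun x _ => abs_nonneg _
  have hlog : (1 / 2 : ℝ) ≤ Real.log n := by
    have h2 : Real.log 2 ≤ Real.log n := Real.log_le_log (by norm_num) (by exact_mod_cast hn)
    linarith [Real.log_two_gt_d9]
  have hr : 2 * (n : ℝ) * Real.log n * ((n : ℝ)⁻¹ * (1 / 2 * B)) = Real.log n * B := by
    field_simp
  rw [hr]
  nlinarith [mul_le_mul_of_nonneg_right hlog hB0]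

end JuntaPaper
end

section
/- There exists a constant ζ ∈ (0,1) such that the following holds for all n ∈ ℕ₊, all ε, δ ∈ (0, 1/2), and every positive integer q with q ≤ ⌊ζ·log(1/δ)/ε²⌋. Let T = (A_1, …, A_q) be any adaptive q-query strategy on {−1,1}^n and let p be any ε-almost uniform distribution on {−1,1}^n. Then the rejection-sampling distribution D°_{p,T,δ} satisfies Pr[D°_{p,T,δ} outputs ⊥] ≤ 1 − δ/2, and the conditional distribution D_{p,T,δ} (i.e. D°_{p,T,δ} conditioned on not outputting ⊥) satisfies dtv(D_{p,T,δ}, E_{p,T}) ≤ δ. -/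
/-!
Write `a = E_{p,T}` and `b = E_{U,T}`. Since `b x = 0` forces `a x = 0`, the rejection sampler
outputs `x` with probability `min (b x) (δ * a x)`, so with `S` the total acceptance probability
everything is controlled by the deficit `δ - S = ∑ x, (δ * a x - b x)⁺`: if `δ - S ≤ δ ^ 2`, then
`S ≥ δ / 2`, and conditioning on acceptance moves `a` by at most `1 - S / δ ≤ δ` in total variation
(`rejection_bound`).

The deficit is bounded by a third moment of the likelihood ratio: `(δ * a - b)⁺ ≤ δ³ a³ / b²`
pointwise. The sum of `a³ / b²` factorises along the queries, and one query contributes the mean of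
`(1 + t)³` over its query set, where `t` is a mean-zero perturbation with `|t| ≤ 4 ε`; this is at
most `1 + 80 ε²` (`step_third_moment`). Hence `∑ a³ / b² ≤ (1 + 80 ε²) ^ q ≤ exp (80 ε² q) ≤ 1 / δ`
as soon as `q ≤ log (1 / δ) / (80 ε²)`, which is why `ζ = 1 / 80` works.
-/

open Finset

namespace JuntaPaper

/-- `p` is `ε`-almost uniform: `|p(x) - 2^{-n}| ≤ ε·2^{-n}` for every `x`. -/
def AlmostUniform {n : ℕ} (ε : ℝ) (p : Cube n → ℝ) : Prop :=
  ∀ x, |p x - (2 : ℝ)⁻¹ ^ n| ≤ ε * (2 : ℝ)⁻¹ ^ n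

/-- The probability mass function of the execution distribution `E_{p,T}` of an
adaptive `q`-query strategy `A` on the distribution `p`:
`E_{p,T}(x₁,…,x_q) = Π_i p(x_i)·1[x_i ∈ A_i(x₁,…,x_{i-1})] / p(A_i(x₁,…,x_{i-1}))`. -/
noncomputable def execP {n q : ℕ} (p : Cube n → ℝ)
    (A : (i : Fin q) → (Fin (i : ℕ) → Cube n) → Finset (Cube n))
    (x : Fin q → Cube n) : ℝ :=
  ∏ i : Fin q,
    (if x i ∈ A i (fun j => x ⟨j.1, lt_trans j.2 i.2⟩) then p (x i) else 0) /
      ∑ z ∈ A i (fun j => x ⟨j.1, lt_trans j.2 i.2⟩), p z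

/-- The acceptance probability of the rejection-sampling protocol on the tuple `x`
drawn from `E_{U,T}`: `min(1, δ·E_{p,T}(x)/E_{U,T}(x))`. -/
noncomputable def acceptProb {n q : ℕ} (p : Cube n → ℝ) (δ : ℝ)
    (A : (i : Fin q) → (Fin (i : ℕ) → Cube n) → Finset (Cube n))
    (x : Fin q → Cube n) : ℝ :=
  min 1 (δ * execP p A x / execP (uniform n) A x)

/-! ### Sums of products along a query history -/

/-- Summing out the last entry of a history in a product of history-dependent factors. -/
lemma sum_prod_succ {α : Type*} [Fintype α] (q : ℕ)
    (f : (i : Fin (q + 1)) → (Fin (i : ℕ) → α) → α → ℝ) :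
    ∑ x : Fin (q + 1) → α, ∏ i, f i (fun j => x ⟨j.1, lt_trans j.2 i.2⟩) (x i) =
      ∑ y : Fin q → α,
        (∏ i : Fin q, f i.castSucc (fun j => y ⟨j.1, lt_trans j.2 i.2⟩) (y i)) *
          ∑ z, f (Fin.last q) y z := by
  rw [← (Fin.snocEquiv (fun _ : Fin (q + 1) => α)).sum_comp, Fintype.sum_prod_type_right]
  refine Finset.sum_congr rfl fun y _ => ?_
  rw [Finset.mul_sum]
  refine Finset.sum_congr rfl fun z _ => ?_
  rw [Fin.prod_univ_castSucc]
  have hsnoc : ∀ (k : ℕ) (hk : k < q) (hk' : k < q + 1),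
      (Fin.snocEquiv (fun _ : Fin (q + 1) => α)) (z, y) ⟨k, hk'⟩ = y ⟨k, hk⟩ := fun k hk hk' =>
    Fin.snoc_castSucc (α := fun _ : Fin (q + 1) => α) z y ⟨k, hk⟩
  have hlast : (Fin.snocEquiv (fun _ : Fin (q + 1) => α)) (z, y) (Fin.last q) = z :=
    Fin.snoc_last (α := fun _ : Fin (q + 1) => α) z y
  congr 1
  · refine Finset.prod_congr rfl fun i _ => ?_
    congr 1
    · funext j
      exact hsnoc j.1 (lt_trans j.2 i.2) _
    · exact hsnoc i.1 i.2 _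
  · rw [hlast]
    congr 1
    funext j
    exact hsnoc j.1 j.2 _

lemma sum_prod_le {α : Type*} [Fintype α] {C : ℝ} (hC : 0 ≤ C) (q : ℕ)
    (f : (i : Fin q) → (Fin (i : ℕ) → α) → α → ℝ) (hf : ∀ i h z, 0 ≤ f i h z)
    (hs : ∀ i h, ∑ z, f i h z ≤ C) :
    ∑ x : Fin q → α, ∏ i, f i (fun j => x ⟨j.1, lt_trans j.2 i.2⟩) (x i) ≤ C ^ q := by
  induction q with
  | zero => simp
  | succ q ih =>
    rw [sum_prod_succ, pow_succ]
    calc _ ≤ ∑ y : Fin q → α,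
          (∏ i : Fin q, f i.castSucc (fun j => y ⟨j.1, lt_trans j.2 i.2⟩) (y i)) * C :=
          Finset.sum_le_sum fun y _ => mul_le_mul_of_nonneg_left (hs _ _)
            (Finset.prod_nonneg fun i _ => hf _ _ _)
      _ ≤ C ^ q * C := by
          rw [← Finset.sum_mul]
          exact mul_le_mul_of_nonneg_right
            (ih (fun i => f i.castSucc) (fun i => hf i.castSucc) (fun i => hs i.castSucc)) hC

lemma sum_prod_eq_one {α : Type*} [Fintype α] (q : ℕ)
    (f : (i : Fin q) → (Fin (i : ℕ) → α) → α → ℝ) (hs : ∀ i h, ∑ z, f i h z = 1) :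
    ∑ x : Fin q → α, ∏ i, f i (fun j => x ⟨j.1, lt_trans j.2 i.2⟩) (x i) = 1 := by
  induction q with
  | zero => simp
  | succ q ih =>
    rw [sum_prod_succ]
    simp only [hs, mul_one]
    exact ih (fun i => f i.castSucc) (fun i => hs i.castSucc)

/-! ### The third moment of a single query -/

/-- The third moment of the likelihood ratio for a single query to `B`: since the ratio
`#B * p z / p(B)` has mean one over `B`, the first-order term in its deviation `t` cancels. -/
lemma step_third_moment {α : Type*} [Fintype α] [DecidableEq α] (B : Finset α) (hB : B.Nonempty)
    {w ε : ℝ} (hw : 0 < w) (hε : 0 < ε) (hε2 : ε < 1 / 2) (p : α → ℝ)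
    (hp : ∀ x, |p x - w| ≤ ε * w) :
    ∑ z, ((if z ∈ B then p z else 0) / ∑ y ∈ B, p y) ^ 3 /
      ((if z ∈ B then w else 0) / ∑ _y ∈ B, w) ^ 2 ≤ 1 + 80 * ε ^ 2 := by
  set P := ∑ y ∈ B, p y with hP
  set m : ℝ := (B.card : ℝ) with hm
  have hm0 : 0 < m := by rw [hm]; exact_mod_cast hB.card_pos
  have hPm : |P - m * w| ≤ ε * m * w := by
    calc |P - m * w| = |∑ y ∈ B, (p y - w)| := by
          rw [Finset.sum_sub_distrib, Finset.sum_const, nsmul_eq_mul]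
      _ ≤ ∑ y ∈ B, |p y - w| := Finset.abs_sum_le_sum_abs _ _
      _ ≤ ∑ _y ∈ B, ε * w := Finset.sum_le_sum fun y _ => hp y
      _ = ε * m * w := by rw [Finset.sum_const, nsmul_eq_mul]; ring
  have hmw : 0 < m * w := mul_pos hm0 hw
  have hPlow : m * w / 2 ≤ P := by
    have := (abs_le.1 hPm).1
    nlinarith
  have hP0 : 0 < P := by linarith
  have hterm : ∀ z ∈ B, ((if z ∈ B then p z else 0) / P) ^ 3 /
      ((if z ∈ B then w else 0) / ∑ _y ∈ B, w) ^ 2 ≤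
      (1 / m) * (1 + 3 * (m * p z / P - 1) + 80 * ε ^ 2) := by
    intro z hz
    rw [if_pos hz, if_pos hz, Finset.sum_const, nsmul_eq_mul, ← hm]
    set t := m * p z / P - 1 with ht
    have hlhs : (p z / P) ^ 3 / (w / (m * w)) ^ 2 = (1 / m) * (1 + t) ^ 3 := by
      rw [ht]; field_simp; ring
    rw [hlhs]
    have htb : |t| ≤ 4 * ε := by
      have h1 : |m * p z - P| ≤ 2 * ε * (m * w) := by
        have h2 := abs_le.1 (hp z)
        have h3 := abs_le.1 hPm
        rw [abs_le]
        constructor <;> nlinarith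
      have h4 : t = (m * p z - P) / P := by rw [ht]; field_simp
      rw [h4, abs_div, abs_of_pos hP0, div_le_iff₀ hP0]
      nlinarith
    have ht2 : t ^ 2 ≤ 16 * ε ^ 2 := by
      have := sq_le_sq' (abs_le.1 htb).1 (abs_le.1 htb).2
      nlinarith
    have htle : t ≤ 2 := by linarith [(abs_le.1 htb).2]
    refine mul_le_mul_of_nonneg_left ?_ (by positivity)
    nlinarith [mul_nonneg (sq_nonneg t) (sub_nonneg.2 htle)]
  calc _ = ∑ z ∈ B, ((if z ∈ B then p z else 0) / P) ^ 3 /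
        ((if z ∈ B then w else 0) / ∑ _y ∈ B, w) ^ 2 := by
        refine (Finset.sum_subset (Finset.subset_univ B) fun z _ hz => ?_).symm
        simp [hz]
    _ ≤ ∑ z ∈ B, (1 / m) * (1 + 3 * (m * p z / P - 1) + 80 * ε ^ 2) :=
        Finset.sum_le_sum hterm
    _ = 1 + 80 * ε ^ 2 := by
        have hlin : ∀ z, (1 / m) * (1 + 3 * (m * p z / P - 1) + 80 * ε ^ 2) =
            (3 / P) * p z + (80 * ε ^ 2 - 2) / m := by
          intro z; field_simp; ring
        simp only [hlin]
        rw [Finset.sum_add_distrib, ← Finset.mul_sum, ← hP, Finset.sum_const, nsmul_eq_mul, ← hm]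
        field_simp
        ring

/-! ### Rejection sampling from a third-moment bound -/

/-- Rejection sampling from `b` towards `a`, abstractly: `a` is a probability vector, `c` is the
sub-probability vector of accepted outcomes, and it suffices to bound the third moment of `a / b`. -/
lemma rejection_bound {X : Type*} [Fintype X] (a b c : X → ℝ) {δ : ℝ} (hδ : 0 < δ)
    (hδ2 : δ < 1 / 2) (ha : ∀ x, 0 ≤ a x) (hb : ∀ x, 0 ≤ b x) (hab : ∀ x, b x = 0 → a x = 0)
    (ha1 : ∑ x, a x = 1) (hc : ∀ x, c x = min (b x) (δ * a x))
    (hM : ∑ x, a x ^ 3 / b x ^ 2 ≤ 1 / δ) :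
    δ / 2 ≤ ∑ x, c x ∧ (1 / 2) * ∑ x, |c x / (∑ y, c y) - a x| ≤ δ := by
  set S := ∑ x, c x with hS
  have hdef : ∀ x, δ * a x - c x ≤ δ ^ 3 * (a x ^ 3 / b x ^ 2) := by
    intro x
    rw [hc]
    rcases (hb x).eq_or_lt with h0 | h0
    · simp [← h0, hab x h0.symm]
    · have hr : 0 ≤ δ ^ 3 * (a x ^ 3 / b x ^ 2) := by have := ha x; positivity
      rcases le_total (δ * a x) (b x) with h | h
      · rw [min_eq_right h]; linarith
      · -- Here `δ * a x / b x ≥ 1`, so multiplying `δ * a x` by its square only increases it.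
        rw [min_eq_left h]
        have h1 : δ * a x ≤ δ ^ 3 * (a x ^ 3 / b x ^ 2) := by
          rw [← mul_div_assoc, le_div_iff₀ (by positivity)]
          have h2 : b x ^ 2 ≤ (δ * a x) ^ 2 := pow_le_pow_left₀ (hb x) h 2
          nlinarith [mul_le_mul_of_nonneg_left h2 (mul_nonneg hδ.le (ha x))]
        linarith
  have hdefS : δ - S ≤ δ ^ 2 := by
    calc δ - S = ∑ x, (δ * a x - c x) := by
          rw [Finset.sum_sub_distrib, ← Finset.mul_sum, ha1, mul_one]
      _ ≤ ∑ x, δ ^ 3 * (a x ^ 3 / b x ^ 2) := Finset.sum_le_sum fun x _ => hdef x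
      _ ≤ δ ^ 3 * (1 / δ) := by
          rw [← Finset.mul_sum]; exact mul_le_mul_of_nonneg_left hM (by positivity)
      _ = δ ^ 2 := by field_simp
  have hSlow : δ / 2 ≤ S := by nlinarith
  have hS0 : 0 < S := by linarith
  have hca : ∀ x, c x ≤ δ * a x := fun x => (hc x).trans_le (min_le_right _ _)
  have hc0 : ∀ x, 0 ≤ c x := fun x => by
    rw [hc]; exact le_min (hb x) (mul_nonneg hδ.le (ha x))
  have hSup : S ≤ δ := by
    calc S ≤ ∑ x, δ * a x := Finset.sum_le_sum fun x _ => hca x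
      _ = δ := by rw [← Finset.mul_sum, ha1, mul_one]
  refine ⟨hSlow, ?_⟩
  -- Both `c / S` and `a` dominate `c / δ`, and each exceeds it by total mass `1 - S / δ`.
  have hpt : ∀ x, |c x / S - a x| ≤ (c x / S - c x / δ) + (a x - c x / δ) := by
    intro x
    have h1 : c x / δ ≤ c x / S := div_le_div_of_nonneg_left (hc0 x) hS0 hSup
    have h2 : c x / δ ≤ a x := by rw [div_le_iff₀ hδ]; linarith [hca x]
    rw [abs_le]
    constructor <;> linarith
  have hsum : ∑ x, |c x / S - a x| ≤ 2 * (1 - S / δ) := by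
    calc _ ≤ ∑ x, ((c x / S - c x / δ) + (a x - c x / δ)) := Finset.sum_le_sum fun x _ => hpt x
      _ = 2 * (1 - S / δ) := by
          rw [Finset.sum_add_distrib, Finset.sum_sub_distrib, Finset.sum_sub_distrib,
            ← Finset.sum_div, ← Finset.sum_div, ha1, ← hS, div_self hS0.ne']
          ring
  have hfin : 1 - S / δ ≤ δ := by
    rw [sub_le_iff_le_add, ← sub_le_iff_le_add', le_div_iff₀ hδ]
    nlinarith
  linarith

/-! ### Rejection sampling for adaptive strategies -/

/-- There exists `ζ ∈ (0,1)` such that for all `n ≥ 1`,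
`ε, δ ∈ (0,1/2)`, every positive `q ≤ ⌊ζ log(1/δ)/ε²⌋`, every adaptive `q`-query
strategy `A` with nonempty query sets, and every `ε`-almost uniform distribution `p` on
`{-1,1}^n`: the rejection-sampling distribution `D°_{p,T,δ}` outputs `⊥` with
probability at most `1 - δ/2`, and the conditional distribution `D_{p,T,δ}` satisfies
`dtv(D_{p,T,δ}, E_{p,T}) ≤ δ`.  Here `D°_{p,T,δ}` outputs `x` with probability
`E_{U,T}(x)·min(1, δ·E_{p,T}(x)/E_{U,T}(x))` and `⊥` with the remaining probability. -/
theorem statement16 :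
    ∃ ζ : ℝ, 0 < ζ ∧ ζ < 1 ∧
      ∀ n : ℕ, 0 < n → ∀ ε δ : ℝ, 0 < ε → ε < 1 / 2 → 0 < δ → δ < 1 / 2 →
      ∀ q : ℕ, 0 < q → q ≤ ⌊ζ * Real.log (1 / δ) / ε ^ 2⌋₊ →
      ∀ A : (i : Fin q) → (Fin (i : ℕ) → Cube n) → Finset (Cube n),
        (∀ i h, (A i h).Nonempty) →
      ∀ p : Cube n → ℝ, IsDist p → AlmostUniform ε p →
      (1 - ∑ x : Fin q → Cube n, execP (uniform n) A x * acceptProb p δ A x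
          ≤ 1 - δ / 2) ∧
      (1 / 2) * ∑ x : Fin q → Cube n,
          |execP (uniform n) A x * acceptProb p δ A x /
              (∑ y : Fin q → Cube n, execP (uniform n) A y * acceptProb p δ A y) -
            execP p A x| ≤ δ := by
  refine ⟨1 / 80, by norm_num, by norm_num, ?_⟩
  intro n _ ε δ hε hε2 hδ hδ2 q _ hq A hA p hpd hpu
  have hw : (0 : ℝ) < (2 : ℝ)⁻¹ ^ n := by positivity
  have hppos : ∀ x, 0 < p x := fun x => by
    have := (abs_le.1 (hpu x)).1
    nlinarith
  have hexec0 : ∀ (r : Cube n → ℝ), (∀ x, 0 < r x) → ∀ x : Fin q → Cube n, 0 ≤ execP r A x := by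
    intro r hr x
    refine Finset.prod_nonneg fun i _ => div_nonneg ?_ (Finset.sum_nonneg fun z _ => (hr z).le)
    split_ifs
    exacts [(hr _).le, le_rfl]
  have ha0 := hexec0 p hppos
  have hb0 := hexec0 (uniform n) fun _ => hw
  have hab : ∀ x : Fin q → Cube n, execP (uniform n) A x = 0 → execP p A x = 0 := by
    intro x hx
    obtain ⟨i, hi, h0⟩ := Finset.prod_eq_zero_iff.1 hx
    refine Finset.prod_eq_zero hi ?_
    have hs : (0 : ℝ) < ∑ z ∈ A i (fun j => x ⟨j.1, lt_trans j.2 i.2⟩), uniform n z :=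
      Finset.sum_pos (fun _ _ => hw) (hA _ _)
    by_cases hxi : x i ∈ A i (fun j => x ⟨j.1, lt_trans j.2 i.2⟩)
    · rw [if_pos hxi] at h0
      exact absurd h0 (div_pos hw hs).ne'
    · rw [if_neg hxi, zero_div]
  have ha1 : ∑ x : Fin q → Cube n, execP p A x = 1 := by
    refine sum_prod_eq_one q
      (fun i h z => (if z ∈ A i h then p z else 0) / ∑ y ∈ A i h, p y) fun i h => ?_
    rw [← Finset.sum_div, Finset.sum_ite_mem, Finset.univ_inter]
    exact div_self (Finset.sum_pos (fun z _ => hppos z) (hA i h)).ne'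
  have hc : ∀ x : Fin q → Cube n, execP (uniform n) A x * acceptProb p δ A x =
      min (execP (uniform n) A x) (δ * execP p A x) := by
    intro x
    rw [acceptProb]
    rcases (hb0 x).eq_or_lt with h0 | h0
    · simp [← h0, hab x h0.symm]
    · rw [mul_min_of_nonneg _ _ h0.le, mul_one, mul_div_cancel₀ _ h0.ne']
  have hM : ∑ x : Fin q → Cube n, execP p A x ^ 3 / execP (uniform n) A x ^ 2 ≤ 1 / δ := by
    have h1 : ∑ x : Fin q → Cube n, execP p A x ^ 3 / execP (uniform n) A x ^ 2 ≤
        (1 + 80 * ε ^ 2) ^ q := by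
      have h2 := sum_prod_le (C := 1 + 80 * ε ^ 2) (by positivity) q
        (fun i h z => ((if z ∈ A i h then p z else 0) / ∑ y ∈ A i h, p y) ^ 3 /
          ((if z ∈ A i h then uniform n z else 0) / ∑ y ∈ A i h, uniform n y) ^ 2)
        (fun i h z => by
          refine div_nonneg (pow_nonneg (div_nonneg ?_ ?_) 3) (sq_nonneg _)
          · split_ifs
            exacts [(hppos _).le, le_rfl]
          · exact Finset.sum_nonneg fun z _ => (hppos z).le)
        (fun i h => step_third_moment (A i h) (hA i h) hw hε hε2 p hpu)
      refine le_trans (le_of_eq (Finset.sum_congr rfl fun x _ => ?_)) h2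
      rw [execP, execP, ← Finset.prod_pow, ← Finset.prod_pow, ← Finset.prod_div_distrib]
    have hlog : 0 ≤ Real.log (1 / δ) := Real.log_nonneg (by rw [le_div_iff₀ hδ]; linarith)
    have hq' : (q : ℝ) ≤ 1 / 80 * Real.log (1 / δ) / ε ^ 2 :=
      (Nat.le_floor_iff (by positivity)).1 hq
    have hq2 : (q : ℝ) * (80 * ε ^ 2) ≤ Real.log (1 / δ) := by
      rw [le_div_iff₀ (by positivity)] at hq'
      linarith
    calc _ ≤ (1 + 80 * ε ^ 2) ^ q := h1
      _ ≤ Real.exp (80 * ε ^ 2) ^ q :=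
          pow_le_pow_left₀ (by positivity) (by linarith [Real.add_one_le_exp (80 * ε ^ 2)]) q
      _ = Real.exp (q * (80 * ε ^ 2)) := (Real.exp_nat_mul _ _).symm
      _ ≤ Real.exp (Real.log (1 / δ)) := Real.exp_le_exp.2 hq2
      _ = 1 / δ := Real.exp_log (by positivity)
  obtain ⟨h1, h2⟩ := rejection_bound (execP p A) (execP (uniform n) A)
    (fun x => execP (uniform n) A x * acceptProb p δ A x) hδ hδ2 ha0 hb0 hab ha1 hc hM
  exact ⟨by linarith, h2⟩


end JuntaPaper
end

section
/- Let g be a distribution on {−1,1}^n, let σ ∈ (0,1), and let t ∈ ℕ₊. Then dtv(g, U) ≤ E_{ν∼D_{σ^t}(g)}[ dtv(g|ν, U) ] + Σ_{j=1}^t E_{ν∼D_{σ^{j−1}}(g)}[ E_{S∼S_σ(stars(ν))}[ dtv( (g|ν)_{stars(ν)∖S}, U ) ] ], where each occurrence of U denotes the uniform distribution on the corresponding hypercube (note D_{σ^0}(g) puts all its mass on the all-stars restriction, for which g|ν = g). -/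
/-!
For `A ⊆ [n]` let `P_A g` be the average of `g` over the coordinates outside `A`: the density of
the distribution that agrees with `g` on `A` and is uniform and independent elsewhere. Put
`d(A, B) = dtv (P_A g) (P_B g)`. Then

* `dtv(g, U) = d([n], ∅)`;
* for `T ⊆ S`, the average over `ν ∼ D_S(g)` of `dtv((g|ν)_T, U)` equals `d(Sᶜ ∪ T, Sᶜ)`
  (`sum_dtvMargU`). In particular `E_{ν ∼ D_S(g)} dtv(g|ν, U) = d([n], Sᶜ)`, and for `T = R \ S`
  with `S ⊆ R` the average over `D_R(g)` is `d(Sᶜ, Rᶜ)`.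

So the claim is the triangle inequality for `d` along a random decreasing chain
`[n] = R₀ ⊇ R₁ ⊇ ⋯ ⊇ R_t`, where each `R_j` keeps every element of `R_{j-1}` independently with
probability `σ`. A `σ`-random subset of a `p`-random set is `pσ`-random (`sum_subsetProb_comp`),
so `R_j` is a `σ^j`-random subset of `[n]`, and the inequality follows by induction on `t`.
-/

open Finset

namespace JuntaPaper

/-- The probability mass function of the marginal on the coordinates in `T` of the
restricted distribution `g|ν` (for `T ⊆ stars(ν)` this is `(g|ν)` projected to `T`). -/
noncomputable def margProb {n : ℕ} (g : Cube n → ℝ) (ν : Restr n) (T : Finset (Fin n))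
    (w : {a // a ∈ T} → Bool) : ℝ :=
  ∑ x, if ∀ i : {a // a ∈ T}, x i.1 = w i then condProb g ν x else 0

/-- Total variation distance between the marginal on `T` of `g|ν` and the uniform
distribution on `{-1,1}^T`. -/
noncomputable def dtvMargU {n : ℕ} (g : Cube n → ℝ) (ν : Restr n)
    (T : Finset (Fin n)) : ℝ :=
  (1 / 2) * ∑ w : {a // a ∈ T} → Bool, |margProb g ν T w - (2 : ℝ)⁻¹ ^ T.card|

/-! ### Averages over coordinates -/

/-- The marginal mass `Pr_{y ∼ g}[y = x on A]`. -/
noncomputable def marg {n : ℕ} (g : Cube n → ℝ) (A : Finset (Fin n)) (x : Cube n) : ℝ :=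
  ∑ y, if ∀ i ∈ A, y i = x i then g y else 0

/-- The average of `g` over the coordinates outside `A`. -/
noncomputable def avg {n : ℕ} (g : Cube n → ℝ) (A : Finset (Fin n)) (x : Cube n) : ℝ :=
  (2 : ℝ)⁻¹ ^ (n - A.card) * marg g A x

/-- The point equal to `w` on `T` and to `x` elsewhere. -/
def glue {n : ℕ} (T : Finset (Fin n)) (x : Cube n) (w : {a // a ∈ T} → Bool) : Cube n :=
  fun i => if h : i ∈ T then w ⟨i, h⟩ else x i

lemma card_agree {n : ℕ} (A : Finset (Fin n)) (x : Cube n) :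
    (∑ y : Cube n, if ∀ i ∈ A, x i = y i then (1 : ℝ) else 0) = 2 ^ (n - A.card) := by
  have h : (univ.filter fun y : Cube n => ∀ i ∈ A, x i = y i) =
      Fintype.piFinset fun i => if i ∈ A then {x i} else (univ : Finset Bool) := by
    ext y
    simp only [mem_filter, mem_univ, true_and, Fintype.mem_piFinset]
    refine forall_congr' fun i => ?_
    by_cases hi : i ∈ A
    · simp only [hi, if_true, mem_singleton, true_imp_iff]
      exact eq_comm
    · simp [hi]
  rw [Finset.sum_boole, h, Fintype.card_piFinset]
  have h2 : ∀ i, (if i ∈ A then ({x i} : Finset Bool) else univ).card =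
      if i ∈ A then 1 else 2 := by
    intro i; split_ifs <;> simp
  simp only [h2]
  rw [Finset.prod_ite]
  have : (univ.filter fun i => i ∉ A) = Aᶜ := by ext; simp
  simp [this, Finset.card_compl]

/-- The map `(x, w) ↦ (glue x w, x|_T)` is an involution, so `glue x w` is uniform when `x` and
`w` are. -/
lemma sum_glue {n : ℕ} (T : Finset (Fin n)) (f : Cube n → ℝ) :
    ∑ x, ∑ w, f (glue T x w) = 2 ^ T.card * ∑ x, f x := by
  let s : Cube n × ({a // a ∈ T} → Bool) → Cube n × ({a // a ∈ T} → Bool) :=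
    fun p => (glue T p.1 p.2, fun i => p.1 i.1)
  have hs : Function.Involutive s := by
    rintro ⟨x, w⟩
    refine Prod.ext ?_ ?_
    · funext i; by_cases h : i ∈ T <;> simp [s, glue, h]
    · funext i; simp [s, glue]
  have h := Equiv.sum_comp hs.toPerm (fun p => f p.1)
  rw [Fintype.sum_prod_type, Fintype.sum_prod_type] at h
  refine h.trans ?_
  simp [Finset.mul_sum]

/-- Averaging is self-adjoint and fixes functions of the coordinates in `A`. -/
lemma sum_mul_eq_avg {n : ℕ} (g φ : Cube n → ℝ) (A : Finset (Fin n))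
    (hφ : ∀ x y : Cube n, (∀ i ∈ A, x i = y i) → φ x = φ y) :
    ∑ x, g x * φ x = ∑ x, avg g A x * φ x := by
  have h : ∀ x, avg g A x * φ x = ∑ y, (2 : ℝ)⁻¹ ^ (n - A.card) * (g y * φ y) *
      (if ∀ i ∈ A, y i = x i then (1 : ℝ) else 0) := by
    intro x
    rw [avg, marg, mul_assoc, Finset.sum_mul, Finset.mul_sum]
    refine Finset.sum_congr rfl fun y _ => ?_
    split_ifs with hy
    · rw [hφ y x hy]; ring
    · simp
  simp only [h]
  rw [Finset.sum_comm]
  refine Finset.sum_congr rfl fun y _ => ?_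
  rw [← Finset.mul_sum, card_agree, mul_right_comm, ← mul_pow]
  simp

/-! ### Restrictions as averages -/

lemma agrees_restrictOn {n : ℕ} (S : Finset (Fin n)) (x y : Cube n) :
    agrees (restrictOn S x) y ↔ ∀ i ∈ Sᶜ, y i = x i := by
  unfold agrees restrictOn
  refine forall_congr' fun i => ?_
  by_cases h : i ∈ S <;> simp [h]

lemma mass_restrictOn {n : ℕ} (g : Cube n → ℝ) (S : Finset (Fin n)) (x : Cube n) :
    mass g (restrictOn S x) = marg g Sᶜ x := by
  simp only [mass, marg, agrees_restrictOn]

lemma starsOf_restrictOn {n : ℕ} (S : Finset (Fin n)) (x : Cube n) :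
    starsOf (restrictOn S x) = S := by
  ext i; simp [starsOf, restrictOn]

lemma restrictOn_congr {n : ℕ} (S : Finset (Fin n)) (x y : Cube n)
    (h : ∀ i ∈ Sᶜ, x i = y i) : restrictOn S x = restrictOn S y := by
  funext i
  by_cases hi : i ∈ S
  · simp [restrictOn, hi]
  · simp [restrictOn, hi, h i (by simpa using hi)]

lemma margProb_restrictOn {n : ℕ} (g : Cube n → ℝ) {S T : Finset (Fin n)} (hT : T ⊆ S)
    (x : Cube n) (w : {a // a ∈ T} → Bool) :
    margProb g (restrictOn S x) T w = marg g (Sᶜ ∪ T) (glue T x w) / marg g Sᶜ x := by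
  rw [margProb, marg, Finset.sum_div]
  refine Finset.sum_congr rfl fun y _ => ?_
  have key : (∀ i ∈ Sᶜ ∪ T, y i = glue T x w i) ↔
      (∀ i : {a // a ∈ T}, y i.1 = w i) ∧ ∀ i ∈ Sᶜ, y i = x i := by
    constructor
    · intro h
      refine ⟨fun i => ?_, fun i hi => ?_⟩
      · simpa [glue] using h i.1 (mem_union_right _ i.2)
      · have hn : i ∉ T := fun hiT => (mem_compl.1 hi) (hT hiT)
        simpa [glue, hn] using h i (mem_union_left _ hi)
    · rintro ⟨h1, h2⟩ i hi
      by_cases hiT : i ∈ T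
      · simpa [glue, hiT] using h1 ⟨i, hiT⟩
      · simpa [glue, hiT] using h2 i ((mem_union.1 hi).resolve_right hiT)
  simp only [key, condProb, mass_restrictOn, agrees_restrictOn]
  by_cases h1 : ∀ i : {a // a ∈ T}, y i.1 = w i
  · simp only [h1, implies_true, if_true, true_and]
  · simp only [h1, if_false, false_and, zero_div]

lemma marg_nonneg {n : ℕ} {g : Cube n → ℝ} (hg : ∀ x, 0 ≤ g x) (A : Finset (Fin n))
    (x : Cube n) : 0 ≤ marg g A x :=
  Finset.sum_nonneg fun y _ => by split_ifs <;> simp [hg y]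

lemma marg_anti {n : ℕ} {g : Cube n → ℝ} (hg : ∀ x, 0 ≤ g x) {A B : Finset (Fin n)}
    (h : A ⊆ B) (x : Cube n) : marg g B x ≤ marg g A x := by
  refine Finset.sum_le_sum fun y _ => ?_
  by_cases hB : ∀ i ∈ B, y i = x i
  · have hA : ∀ i ∈ A, y i = x i := fun i hi => hB i (h hi)
    rw [if_pos hB, if_pos hA]
  · rw [if_neg hB]; split_ifs <;> simp [hg y]

lemma marg_congr {n : ℕ} (g : Cube n → ℝ) (A : Finset (Fin n)) {x y : Cube n}
    (h : ∀ i ∈ A, x i = y i) : marg g A x = marg g A y := by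
  refine Finset.sum_congr rfl fun z _ => ?_
  have : (∀ i ∈ A, z i = x i) ↔ ∀ i ∈ A, z i = y i :=
    forall₂_congr fun i hi => by rw [h i hi]
  simp only [this]

/-- The average over `ν ∼ D_S(g)` of the distance from uniform of `(g|ν)_T` is the distance
between two averages of `g`. -/
lemma sum_dtvMargU {n : ℕ} {g : Cube n → ℝ} (hg : ∀ x, 0 ≤ g x) {S T : Finset (Fin n)}
    (hT : T ⊆ S) :
    ∑ x, g x * dtvMargU g (restrictOn S x) T = dtv (avg g (Sᶜ ∪ T)) (avg g Sᶜ) := by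
  rw [sum_mul_eq_avg g _ Sᶜ fun x y h => by rw [restrictOn_congr S x y h]]
  set ψ : Cube n → ℝ := fun y => |marg g (Sᶜ ∪ T) y - 2⁻¹ ^ T.card * marg g Sᶜ y| with hψ
  have hcS : n - Sᶜ.card = S.card := by
    have h := card_le_univ S
    rw [Finset.card_compl, Fintype.card_fin]
    rw [Fintype.card_fin] at h
    omega
  have hdisj : Disjoint Sᶜ T :=
    Finset.disjoint_left.2 fun i hi hiT => (mem_compl.1 hi) (hT hiT)
  have hcST : n - (Sᶜ ∪ T).card = S.card - T.card := by
    rw [Finset.card_union_of_disjoint hdisj]; omega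
  have hcT : T.card ≤ S.card := card_le_card hT
  have hpow : (2 : ℝ)⁻¹ ^ S.card = 2⁻¹ ^ (S.card - T.card) * 2⁻¹ ^ T.card := by
    rw [← pow_add]; congr 1; omega
  have h1 : ∀ x, avg g Sᶜ x * dtvMargU g (restrictOn S x) T =
      2⁻¹ ^ S.card * (1 / 2) * ∑ w, ψ (glue T x w) := by
    intro x
    rw [avg, hcS, dtvMargU, mul_assoc, mul_assoc, ← mul_assoc (marg _ _ _),
      mul_comm (marg _ _ _), mul_assoc, Finset.mul_sum]
    congr 2
    refine Finset.sum_congr rfl fun w _ => ?_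
    have hgl : marg g Sᶜ (glue T x w) = marg g Sᶜ x := by
      refine marg_congr g _ fun i hi => ?_
      have hn : i ∉ T := fun hiT => (mem_compl.1 hi) (hT hiT)
      simp [glue, hn]
    have h0 := marg_nonneg hg Sᶜ x
    have hle : marg g (Sᶜ ∪ T) (glue T x w) ≤ marg g Sᶜ x :=
      hgl ▸ marg_anti hg subset_union_left _
    have h0' := marg_nonneg hg (Sᶜ ∪ T) (glue T x w)
    simp only [hψ]
    rw [margProb_restrictOn g hT, hgl]
    -- A restriction of mass zero contributes zero on both sides.
    rcases h0.eq_or_lt with hz | hpos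
    · have : marg g (Sᶜ ∪ T) (glue T x w) = 0 := le_antisymm (hz ▸ hle) h0'
      simp [this, ← hz]
    · rw [← abs_of_pos hpos, ← abs_mul, abs_of_pos hpos, mul_sub, mul_div_cancel₀ _ hpos.ne',
        mul_comm (marg g Sᶜ x)]
  simp only [h1]
  rw [← Finset.mul_sum, sum_glue, dtv, Finset.mul_sum, Finset.mul_sum, Finset.mul_sum]
  refine Finset.sum_congr rfl fun x _ => ?_
  have h2 : avg g (Sᶜ ∪ T) x - avg g Sᶜ x = 2⁻¹ ^ (S.card - T.card) *
      (marg g (Sᶜ ∪ T) x - 2⁻¹ ^ T.card * marg g Sᶜ x) := by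
    rw [avg, avg, hcS, hcST, hpow]; ring
  have h3 : (2 : ℝ)⁻¹ ^ T.card * 2 ^ T.card = 1 := by rw [← mul_pow]; simp
  rw [h2, abs_mul, abs_of_nonneg (by positivity), hpow]
  simp only [hψ]
  linear_combination (2⁻¹ ^ (S.card - T.card) * (1 / 2) *
    |marg g (Sᶜ ∪ T) x - 2⁻¹ ^ T.card * marg g Sᶜ x|) * h3

/-! ### Random subsets -/

lemma sum_subsetProb {n : ℕ} (σ : ℝ) (T : Finset (Fin n)) :
    ∑ S ∈ T.powerset, subsetProb σ T S = 1 := by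
  simp only [subsetProb]
  rw [Finset.sum_pow_mul_eq_add_pow]; simp

lemma subsetProb_nonneg {n : ℕ} {σ : ℝ} (h0 : 0 ≤ σ) (h1 : σ ≤ 1) (T S : Finset (Fin n)) :
    0 ≤ subsetProb σ T S :=
  mul_nonneg (pow_nonneg h0 _) (pow_nonneg (sub_nonneg.2 h1) _)

lemma sum_subsetProb_one {n : ℕ} (T : Finset (Fin n)) (F : Finset (Fin n) → ℝ) :
    ∑ S ∈ T.powerset, subsetProb 1 T S * F S = F T := by
  rw [Finset.sum_eq_single T]
  · simp [subsetProb]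
  · intro S hS hne
    have hlt : S.card < T.card := card_lt_card ((mem_powerset.1 hS).ssubset_of_ne hne)
    have : T.card - S.card ≠ 0 := by omega
    simp [subsetProb, this]
  · simp

/-- A `σ`-random subset of a `p`-random subset of `T` is a `pσ`-random subset of `T`. -/
lemma sum_subsetProb_comp {n : ℕ} (p σ : ℝ) (T : Finset (Fin n)) (F : Finset (Fin n) → ℝ) :
    ∑ R ∈ T.powerset, subsetProb p T R * ∑ S ∈ R.powerset, subsetProb σ R S * F S =
      ∑ S ∈ T.powerset, subsetProb (p * σ) T S * F S := by
  simp only [Finset.mul_sum]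
  rw [Finset.sum_comm' (t' := T.powerset) (s' := fun S => T.powerset.filter (S ⊆ ·)) (by
    intro R S
    simp only [mem_powerset, mem_filter]
    exact ⟨fun h => ⟨⟨h.1, h.2⟩, h.2.trans h.1⟩, fun h => h.1⟩)]
  refine Finset.sum_congr rfl fun S hS => ?_
  rw [mem_powerset] at hS
  -- Write `R = S ∪ Q` with `Q ⊆ T \ S`, and apply the binomial theorem to the sum over `Q`.
  have h1 : ∑ R ∈ T.powerset.filter (S ⊆ ·), subsetProb p T R * (subsetProb σ R S * F S) =
      ∑ Q ∈ (T \ S).powerset, (p * σ) ^ S.card * F S *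
        ((p * (1 - σ)) ^ Q.card * (1 - p) ^ ((T \ S).card - Q.card)) := by
    refine Finset.sum_bij' (fun R _ => R \ S) (fun Q _ => S ∪ Q) ?_ ?_ ?_ ?_ ?_
    · intro R hR
      simp only [mem_filter, mem_powerset] at hR ⊢
      exact sdiff_subset_sdiff hR.1 le_rfl
    · intro Q hQ
      simp only [mem_filter, mem_powerset] at hQ ⊢
      exact ⟨union_subset hS (hQ.trans sdiff_subset), subset_union_left⟩
    · intro R hR
      simp only [mem_filter] at hR
      exact union_sdiff_of_subset hR.2
    · intro Q hQ
      rw [mem_powerset] at hQ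
      exact union_sdiff_cancel_left (disjoint_sdiff.mono_right hQ)
    · intro R hR
      simp only [mem_filter, mem_powerset] at hR
      have hc := card_le_card hR.2
      have e1 : (R \ S).card = R.card - S.card := card_sdiff_of_subset hR.2
      have e2 : (T \ S).card - (R \ S).card = T.card - R.card := by
        rw [e1, card_sdiff_of_subset hS]; omega
      have e3 : p ^ R.card = p ^ S.card * p ^ (R.card - S.card) := by
        rw [← pow_add]; congr 1; omega
      rw [e2, e1, subsetProb, subsetProb, e3, mul_pow, mul_pow]
      ring
  rw [h1, ← Finset.mul_sum, Finset.sum_pow_mul_eq_add_pow, subsetProb, card_sdiff_of_subset hS,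
    show p * (1 - σ) + (1 - p) = 1 - p * σ by ring]
  ring

/-! ### The triangle inequality along a random chain -/

lemma dtv_triangle {α : Type*} [Fintype α] (p q r : α → ℝ) :
    dtv p r ≤ dtv p q + dtv q r := by
  rw [dtv, dtv, dtv, ← mul_add, ← Finset.sum_add_distrib]
  gcongr
  exact abs_sub_le _ _ _

/-- The triangle inequality along a random chain of `σ`-random subsets. -/
lemma chain_bound {n : ℕ} (a : Finset (Fin n) → Cube n → ℝ) {σ : ℝ} (h0 : 0 ≤ σ) (h1 : σ ≤ 1)
    (t : ℕ) :
    dtv (a univ) (a ∅) ≤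
      ∑ R ∈ univ.powerset, subsetProb (σ ^ t) univ R * dtv (a univ) (a Rᶜ) +
        ∑ j ∈ Finset.Icc 1 t, ∑ R ∈ univ.powerset, subsetProb (σ ^ (j - 1)) univ R *
          ∑ S ∈ R.powerset, subsetProb σ R S * dtv (a Sᶜ) (a Rᶜ) := by
  induction t with
  | zero =>
    rw [pow_zero, sum_subsetProb_one]
    simp
  | succ t ih =>
    refine ih.trans ?_
    rw [Finset.sum_Icc_succ_top (by omega), Nat.add_sub_cancel, pow_succ,
      ← sum_subsetProb_comp, add_comm (∑ j ∈ Finset.Icc 1 t, _), ← add_assoc,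
      ← Finset.sum_add_distrib]
    gcongr with R _
    rw [← mul_add, ← Finset.sum_add_distrib]
    refine mul_le_mul_of_nonneg_left ?_
      (subsetProb_nonneg (pow_nonneg h0 _) (pow_le_one₀ h0 h1) _ _)
    calc dtv (a univ) (a Rᶜ)
        = ∑ S ∈ R.powerset, subsetProb σ R S * dtv (a univ) (a Rᶜ) := by
          rw [← Finset.sum_mul, sum_subsetProb, one_mul]
      _ ≤ _ := by
          refine Finset.sum_le_sum fun S _ => ?_
          rw [← mul_add]
          exact mul_le_mul_of_nonneg_left (dtv_triangle _ _ _) (subsetProb_nonneg h0 h1 _ _)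

lemma EDσCond_allStars {n : ℕ} {g : Cube n → ℝ} (hg : ∑ x, g x = 1) (p : ℝ)
    (F : Restr n → ℝ) :
    EDσCond g (allStars n) p F =
      ∑ R ∈ univ.powerset, subsetProb p univ R * ∑ x, g x * F (restrictOn R x) := by
  have hs : starsOf (allStars n) = univ := by ext; simp [starsOf, allStars]
  have ha : ∀ x, agrees (allStars n) x := fun x i b h => by simp [allStars] at h
  have hc : ∀ x, condProb g (allStars n) x = g x := fun x => by
    simp [condProb, mass, ha, hg]
  simp only [EDσCond, hs, hc, Finset.mul_sum]
  rw [Finset.sum_comm]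
  exact Finset.sum_congr rfl fun R _ => Finset.sum_congr rfl fun x _ => by ring

/-- Let `g` be a distribution on `{-1,1}^n`, `σ ∈ (0,1)`, `t ≥ 1`.
Then `dtv(g,U) ≤ E_{ν∼D_{σ^t}(g)}[dtv(g|ν, U)]
 + Σ_{j=1}^t E_{ν∼D_{σ^{j-1}}(g)} E_{S∼S_σ(stars(ν))}[dtv((g|ν)_{stars(ν)∖S}, U)]`,
where each `U` is the uniform distribution on the corresponding hypercube. -/
theorem statement18 (n : ℕ) (g : Cube n → ℝ) (hg : IsDist g)
    (σ : ℝ) (hσ0 : 0 < σ) (hσ1 : σ < 1) (t : ℕ) (ht : 0 < t) :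
    dtv g (uniform n) ≤
      EDσCond g (allStars n) (σ ^ t) (fun ν => dtvMargU g ν (starsOf ν)) +
        ∑ j ∈ Finset.Icc 1 t,
          EDσCond g (allStars n) (σ ^ (j - 1))
            (fun ν => ∑ S ∈ (starsOf ν).powerset,
              subsetProb σ (starsOf ν) S * dtvMargU g ν (starsOf ν \ S)) := by
  have havg1 : avg g univ = g := by
    funext x
    have : ∀ y : Cube n, (∀ i ∈ (univ : Finset (Fin n)), y i = x i) ↔ y = x := fun y => by
      simp [funext_iff]
    simp [avg, marg, ← funext_iff]
  have havg0 : avg g ∅ = uniform n := by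
    funext x
    simp [avg, marg, uniform, hg.2]
  have hfst : ∀ R : Finset (Fin n),
      ∑ x, g x * dtvMargU g (restrictOn R x) (starsOf (restrictOn R x)) =
        dtv (avg g univ) (avg g Rᶜ) := by
    intro R
    simp only [starsOf_restrictOn]
    rw [sum_dtvMargU hg.1 (Subset.refl R), union_comm, union_compl]
  have hsnd : ∀ R : Finset (Fin n),
      ∑ x, g x * ∑ S ∈ (starsOf (restrictOn R x)).powerset,
        subsetProb σ (starsOf (restrictOn R x)) S *
          dtvMargU g (restrictOn R x) (starsOf (restrictOn R x) \ S) =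
        ∑ S ∈ R.powerset, subsetProb σ R S * dtv (avg g Sᶜ) (avg g Rᶜ) := by
    intro R
    simp only [starsOf_restrictOn, Finset.mul_sum]
    rw [Finset.sum_comm]
    refine Finset.sum_congr rfl fun S hS => ?_
    rw [mem_powerset] at hS
    have hc : Sᶜ = Rᶜ ∪ R \ S := by
      ext i
      have := @hS i
      simp only [mem_compl, mem_union, mem_sdiff]
      tauto
    rw [hc, ← sum_dtvMargU hg.1 (sdiff_subset (s := R) (t := S)), Finset.mul_sum]
    exact Finset.sum_congr rfl fun x _ => by ring
  have h := chain_bound (avg g) hσ0.le hσ1.le t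
  rw [havg0] at h
  simp only [EDσCond_allStars hg.2, hfst, hsnd]
  rwa [havg1] at h ⊢

end JuntaPaper
end

section
/- Let n ∈ ℕ₊ and let i ∈ ℕ be even with i ≥ 2. Then the number of tuples (j_1, …, j_i) ∈ [n]^i in which every element of [n] occurs an even number of times is at most (n/2)^{i/2} · i! / (i/2)!. -/
open Finset

/-!
Write `i = 2k`, and let `f k` be the number of tuples of length `2k` in which every value occurs an
even number of times. In such a tuple of length `2(k+1)`, the value `a` of the first entry occurs
again at some later position. Deleting both occurrences leaves a tuple counted by `f k`, and
the original is recovered from the later position (`2k+1` choices), the value `a` (`n` choices) and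
the shorter tuple. Hence `f (k+1) ≤ (2k+1) * n * f k`, and since
`(2k+2)! / (k+1)! = 2 * (2k+1) * ((2k)! / k!)`, the bound follows by induction on `k`.
-/

/-- The tuples of length `m` over `Fin n` in which every value occurs an even number of times. -/
def evenTuples (n m : ℕ) : Finset (Fin m → Fin n) :=
  univ.filter fun j => ∀ a : Fin n, Even (univ.filter (fun l => j l = a)).card

/-- Every even tuple of length `m + 2` arises from an even tuple of length `m` by inserting one
value twice: at the front, and at one of the `m + 1` positions after it. -/
lemma card_evenTuples_add_two (n m : ℕ) :
    (evenTuples n (m + 2)).card ≤ (m + 1) * (n * (evenTuples n m).card) := by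
  let g : Fin (m + 1) × Fin n × (Fin m → Fin n) → (Fin (m + 2) → Fin n) :=
    fun x => Fin.cons x.2.1 (Fin.insertNth (α := fun _ => Fin n) x.1 x.2.1 x.2.2)
  have hsub : evenTuples n (m + 2) ⊆ (univ ×ˢ univ ×ˢ evenTuples n m).image g := by
    intro j hj
    simp only [evenTuples, mem_filter, mem_univ, true_and] at hj
    have hp : ∃ p : Fin (m + 1), j p.succ = j 0 := by
      by_contra! hne
      have h := hj (j 0)
      rw [card_filter, Fin.sum_univ_succ] at h
      simp [hne] at h
    obtain ⟨p, hp⟩ := hp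
    refine mem_image.2 ⟨(p, j 0, fun l => j (p.succAbove l).succ), ?_, ?_⟩
    · simp only [evenTuples, mem_product, mem_filter, mem_univ, true_and]
      intro a
      have h := hj a
      rw [card_filter, Fin.sum_univ_succ, Fin.sum_univ_succAbove _ p, hp] at h
      rw [card_filter]
      split_ifs at h <;> grind
    · funext l
      refine Fin.cases ?_ (fun q => ?_) l
      · simp [g]
      · rcases Fin.eq_self_or_eq_succAbove p q with rfl | ⟨r, rfl⟩
        · simp [g, hp]
        · simp [g]
  calc (evenTuples n (m + 2)).card
      ≤ _ := card_le_card hsub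
    _ ≤ _ := card_image_le
    _ = _ := by simp [card_product]

/-- The bound on even tuples with the denominators cleared. -/
lemma card_evenTuples_mul_le (n k : ℕ) :
    (evenTuples n (2 * k)).card * (2 ^ k * k.factorial) ≤ n ^ k * (2 * k).factorial := by
  induction k with
  | zero => simpa using (evenTuples n 0).card_le_univ
  | succ k ih =>
    have h := card_evenTuples_add_two n (2 * k)
    calc (evenTuples n (2 * k + 2)).card * (2 ^ (k + 1) * (k + 1).factorial)
        ≤ (2 * k + 1) * (n * (evenTuples n (2 * k)).card) * (2 ^ (k + 1) * (k + 1).factorial) :=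
          Nat.mul_le_mul_right _ h
      _ = (2 * k + 1) * n * (2 * (k + 1)) *
            ((evenTuples n (2 * k)).card * (2 ^ k * k.factorial)) := by
          rw [Nat.factorial_succ]; ring
      _ ≤ (2 * k + 1) * n * (2 * (k + 1)) * (n ^ k * (2 * k).factorial) :=
          Nat.mul_le_mul_left _ ih
      _ = n ^ (k + 1) * (2 * k + 2).factorial := by
          rw [Nat.factorial_succ (2 * k + 1), Nat.factorial_succ (2 * k)]; ring

/-- Let `n ≥ 1` and let `i ≥ 2` be even.  The number of tuples
`(j_1,…,j_i) ∈ [n]^i` in which every element of `[n]` occurs an even number of times is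
at most `(n/2)^{i/2} · i!/(i/2)!`. -/
theorem statement19 (n : ℕ) (hn : 0 < n) (i : ℕ) (hi : 2 ≤ i) (heven : Even i) :
    (Nat.card {j : Fin i → Fin n //
        ∀ a : Fin n, Even (Finset.univ.filter (fun ℓ => j ℓ = a)).card} : ℝ) ≤
      ((n : ℝ) / 2) ^ (i / 2) * (Nat.factorial i : ℝ) / (Nat.factorial (i / 2) : ℝ) := by
  obtain ⟨k, rfl⟩ := heven.two_dvd
  have hcard : Nat.card {j : Fin (2 * k) → Fin n //
      ∀ a : Fin n, Even (Finset.univ.filter (fun ℓ => j ℓ = a)).card} =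
      (evenTuples n (2 * k)).card := by
    rw [Nat.card_eq_fintype_card, Fintype.card_subtype, evenTuples]
  have h : ((evenTuples n (2 * k)).card : ℝ) * (2 ^ k * k.factorial) ≤
      n ^ k * (2 * k).factorial := by
    exact_mod_cast card_evenTuples_mul_le n k
  rw [hcard, Nat.mul_div_cancel_left k two_pos, div_pow, div_mul_eq_mul_div, div_div,
    le_div_iff₀ (by positivity)]
  exact h
end
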